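/- arXiv:0810.0443 — 2 statements merged into one kernel-verified Lean document; each statement's English description precedes it below -/
import Mathlib

section
/- Let F_k be a finitely generated free group and let φ be an injective endomorphism of F_k. Then for every sufficiently large prime p, the mapping torus HNN_φ(F_k) has a subgroup of finite index that is residually (finite p). That is, there exists N such that for all primes p > N, HNN_φ(F_k) is virtually a residually (finite p)-group. -/
/-- The defining relations of the mapping torus (ascending HNN extension)
`HNN_φ(F_k) = ⟨x₁,…,x_k, t ∣ t xᵢ t⁻¹ = φ(xᵢ)⟩`, with generators `Option (Fin k)`
where `none` is the stable letter `t` and `some i` is `xᵢ`. -/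
def mappingTorusRels (k : ℕ) (φ : FreeGroup (Fin k) →* FreeGroup (Fin k)) :
    Set (FreeGroup (Option (Fin k))) :=
  { r | ∃ i : Fin k,
      r = FreeGroup.of none * FreeGroup.map Option.some (FreeGroup.of i) *
          (FreeGroup.of none)⁻¹ * (FreeGroup.map Option.some (φ (FreeGroup.of i)))⁻¹ }

/-- The mapping torus `HNN_φ(F_k)` of an endomorphism `φ` of the free group `F_k`. -/
abbrev MappingTorus (k : ℕ) (φ : FreeGroup (Fin k) →* FreeGroup (Fin k)) : Type :=
  PresentedGroup (mappingTorusRels k φ)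

/-- A group `G` is residually (finite `p`) if every nontrivial element has a nontrivial
image under some homomorphism onto a finite `p`-group. -/
def ResiduallyFiniteP (p : ℕ) (G : Type*) [Group G] : Prop :=
  ∀ g : G, g ≠ 1 → ∃ (Q : Type) (_ : Group Q) (_ : Fintype Q) (f : G →* Q),
    Function.Surjective f ∧ IsPGroup p Q ∧ f g ≠ 1


namespace BSapir
open MvPolynomial

section NF
variable {K : Type*} [Field K] {ι : Type*}

lemma nf_dec (f : ι → MvPolynomial ι K) (Q : ℕ) (hf : ∀ i, (f i).totalDegree < Q)
    (m : ι →₀ ℕ) (i : ι) (hi : Q ≤ m i) (m' : ι →₀ ℕ)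
    (hm' : m' ∈ (f i * monomial (m - Finsupp.single i Q) (1 : K)).support) :
    m'.degree < m.degree := by
  classical
  have h1 : m'.degree ≤ (f i * monomial (m - Finsupp.single i Q) (1 : K)).totalDegree := by
    exact le_totalDegree hm'
  have h2 := totalDegree_mul (f i) (monomial (m - Finsupp.single i Q) (1 : K))
  have h3 : (monomial (m - Finsupp.single i Q) (1 : K)).totalDegree
      = (m - Finsupp.single i Q).degree := by
    rw [totalDegree_monomial _ one_ne_zero]; rfl
  have h4 : m - Finsupp.single i Q + Finsupp.single i Q = m :=
    tsub_add_cancel_of_le (by simpa using hi)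
  have h5 : m.degree = (m - Finsupp.single i Q).degree + Q := by
    conv_lhs => rw [← h4]
    simp
  have := hf i
  omega

open Classical in
/-- Normal form of a monomial modulo the relations `X i ^ Q = f i`. -/
noncomputable def nf (f : ι → MvPolynomial ι K) (Q : ℕ) (hf : ∀ i, (f i).totalDegree < Q)
    (m : ι →₀ ℕ) : MvPolynomial ι K :=
  if h : ∃ i, Q ≤ m i then
    ∑ m' ∈ (f h.choose * monomial (m - Finsupp.single h.choose Q) (1 : K)).support.attach,
      coeff m'.1 (f h.choose * monomial (m - Finsupp.single h.choose Q) (1 : K)) •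
        nf f Q hf m'.1
  else monomial m 1
termination_by m.degree
decreasing_by exact nf_dec f Q hf m h.choose h.choose_spec _ m'.2

/-- Linear extension of `nf`. -/
noncomputable def NF (f : ι → MvPolynomial ι K) (Q : ℕ) (hf : ∀ i, (f i).totalDegree < Q) :
    MvPolynomial ι K →ₗ[K] MvPolynomial ι K :=
  (basisMonomials ι K).constr K (nf f Q hf)

variable (f : ι → MvPolynomial ι K) (Q : ℕ) (hf : ∀ i, (f i).totalDegree < Q)

lemma NF_monomial (m : ι →₀ ℕ) : NF f Q hf (monomial m 1) = nf f Q hf m := by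
  have := (basisMonomials ι K).constr_basis K (nf f Q hf) m
  simpa [NF] using this

lemma NF_apply (g : MvPolynomial ι K) :
    NF f Q hf g = ∑ m ∈ g.support, coeff m g • nf f Q hf m := by
  conv_lhs => rw [g.as_sum]
  rw [map_sum]
  refine Finset.sum_congr rfl fun m _ => ?_
  rw [← NF_monomial, ← map_smul, smul_monomial, smul_eq_mul, mul_one]

lemma nf_red (m : ι →₀ ℕ) (h : ∀ i, m i < Q) : nf f Q hf m = monomial m 1 := by
  rw [nf, dif_neg]
  push Not
  exact h

lemma nf_step (m : ι →₀ ℕ) (h : ∃ i, Q ≤ m i) :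
    ∃ i, Q ≤ m i ∧ nf f Q hf m = NF f Q hf (f i * monomial (m - Finsupp.single i Q) (1 : K)) := by
  refine ⟨h.choose, h.choose_spec, ?_⟩
  rw [nf, dif_pos h, NF_apply]
  exact Finset.sum_attach _ (fun m' => coeff m' (f h.choose * monomial (m - Finsupp.single h.choose Q) (1 : K)) •
        nf f Q hf m')

lemma NF_kill (d : ℕ) : ∀ (g : MvPolynomial ι K), (∀ m ∈ g.support, m.degree < d) → ∀ i,
    NF f Q hf (g * (X i ^ Q - f i)) = 0 := by
  classical
  induction d with
  | zero =>
    intro g hg i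
    have : g = 0 := by
      rw [← support_eq_empty, Finset.eq_empty_iff_forall_notMem]
      intro m hm; exact absurd (hg m hm) (by omega)
    simp [this]
  | succ d ih =>
    intro g hg i
    have key : ∀ m : ι →₀ ℕ, m.degree < d + 1 →
        NF f Q hf (monomial m 1 * (X i ^ Q - f i)) = 0 := by
      intro m hm
      have e1 : ∀ (i : ι) (m : ι →₀ ℕ), (monomial m (1:K)) * X i ^ Q
          = monomial (m + Finsupp.single i Q) 1 := by
        intro i m
        rw [X_pow_eq_monomial, monomial_mul, one_mul]
      obtain ⟨j, hj, hj2⟩ := nf_step f Q hf (m + Finsupp.single i Q) ⟨i, by simp⟩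
      rw [mul_sub, map_sub, e1, NF_monomial, hj2]
      by_cases hij : j = i
      · subst hij
        rw [add_tsub_cancel_right, mul_comm, sub_self]
      · have hj' : Q ≤ m j := by
          simpa [Finsupp.single_apply, Ne.symm hij] using hj
        obtain ⟨m', rfl⟩ : ∃ m', m = m' + Finsupp.single j Q :=
          ⟨m - Finsupp.single j Q, (tsub_add_cancel_of_le (by simpa using hj')).symm⟩
        have e2 : m' + Finsupp.single j Q + Finsupp.single i Q - Finsupp.single j Q
            = m' + Finsupp.single i Q := by
          rw [add_right_comm, add_tsub_cancel_right]
        have hdeg : ∀ l, ∀ m2 ∈ (f l * monomial m' (1:K)).support, m2.degree < d := by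
          intro l m2 hm2
          have := nf_dec f Q hf (m' + Finsupp.single l Q) l (by simp) m2
            (by rwa [add_tsub_cancel_right])
          simp at this hm
          omega
        have h1 := ih (f j * monomial m' 1) (hdeg j) i
        have h2 := ih (f i * monomial m' 1) (hdeg i) j
        rw [mul_sub, map_sub, sub_eq_zero, mul_assoc, e1] at h1 h2
        rw [e2, h1, mul_comm (monomial _ _) (f i), h2, sub_eq_zero]
        congr 1
        ring
    rw [g.as_sum, Finset.sum_mul, map_sum]
    refine Finset.sum_eq_zero fun m hm => ?_
    have : monomial m (coeff m g) = coeff m g • monomial m (1:K) := by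
      rw [smul_monomial, smul_eq_mul, mul_one]
    rw [this, smul_mul_assoc, map_smul, key m (hg m hm), smul_zero]

/-- Low degree polynomials are independent modulo the ideal `(X i ^ Q - f i)`. -/
lemma eq_zero_of_mem (hf : ∀ i, (f i).totalDegree < Q) (g : MvPolynomial ι K)
    (hg : g ∈ Ideal.span (Set.range fun i => X i ^ Q - f i)) (hd : g.totalDegree < Q) :
    g = 0 := by
  have h0 : NF f Q hf g = 0 := by
    refine Submodule.span_induction (p := fun g _ => ∀ a, NF f Q hf (a * g) = 0)
      ?_ ?_ ?_ ?_ hg 1 |> fun h => by simpa using h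
    · rintro _ ⟨i, rfl⟩ a
      exact NF_kill f Q hf ((a.support.sup Finsupp.degree) + 1) a
        (fun m hm => Nat.lt_succ_of_le (Finset.le_sup (f := Finsupp.degree) hm)) i
    · intro a; simp
    · intro x y _ _ hx hy a
      rw [mul_add, map_add, hx, hy, add_zero]
    · intro r x _ hx a
      rw [smul_eq_mul, ← mul_assoc]; exact hx _
  rw [NF_apply] at h0
  rw [g.as_sum, ← h0]
  refine Finset.sum_congr rfl fun m hm => ?_
  rw [nf_red f Q hf m, smul_monomial, smul_eq_mul, mul_one]
  intro i
  refine lt_of_le_of_lt ?_ hd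
  have h1 : m.degree ≤ g.totalDegree := by
    exact le_totalDegree hm
  exact (Finsupp.le_degree i m).trans h1

end NF
end BSapir

namespace BSapir
open MvPolynomial

lemma kron_inj {n Q : ℕ} (hQ : 1 < Q) (v w : Fin n →₀ ℕ) (hv : ∀ i, v i < Q) (hw : ∀ i, w i < Q)
    (h : ∑ x : Fin n, Q ^ x.1 * v x = ∑ x : Fin n, Q ^ x.1 * w x) : v = w := by
  refine Finsupp.ext <| congrFun <| List.ofFn_inj.mp ?_
  apply Nat.ofDigits_inj_of_len_eq hQ
    (by simp) (by simpa [List.mem_ofFn] using hv) (by simpa [List.mem_ofFn] using hw)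
  simpa only [Nat.ofDigits_eq_sum_mapIdx, List.mapIdx_eq_ofFn, List.get_ofFn, List.length_ofFn,
    Fin.val_cast, mul_comm, List.sum_ofFn] using! h

lemma kron_ne_zero {K : Type*} [Field K] {n Q : ℕ} (h : MvPolynomial (Fin (n+1)) K) (hh : h ≠ 0)
    (hQ : 1 < Q) (hd : h.totalDegree < Q) :
    aeval (fun j : Fin (n+1) => (Polynomial.X : Polynomial K) ^ (Q ^ j.1)) h ≠ 0 ∧
    (aeval (fun j : Fin (n+1) => (Polynomial.X : Polynomial K) ^ (Q ^ j.1)) h).natDegree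
      ≤ h.totalDegree * Q ^ n := by
  classical
  have e : aeval (fun j : Fin (n+1) => (Polynomial.X : Polynomial K) ^ (Q ^ j.1)) h =
      ∑ m ∈ h.support, Polynomial.C (coeff m h) * Polynomial.X ^ (∑ x : Fin (n+1), Q ^ x.1 * m x) := by
    rw [aeval_def, eval₂_eq']
    refine Finset.sum_congr rfl fun m _ => ?_
    rw [← Polynomial.C_eq_algebraMap]
    congr 1
    rw [← Finset.prod_pow_eq_pow_sum]
    refine Finset.prod_congr rfl fun x _ => ?_
    rw [pow_mul]
  have hb : ∀ m ∈ h.support, ∀ i, m i < Q := fun m hm i =>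
    lt_of_le_of_lt ((Finsupp.le_degree i m).trans (le_totalDegree hm)) hd
  constructor
  · obtain ⟨m0, hm0⟩ := Finset.nonempty_iff_ne_empty.mpr (mt support_eq_empty.mp hh)
    intro h0
    rw [e] at h0
    have h1 := congrArg (fun q => Polynomial.coeff q (∑ x : Fin (n+1), Q ^ x.1 * m0 x)) h0
    simp only [Polynomial.finsetSum_coeff, Polynomial.coeff_C_mul, Polynomial.coeff_X_pow,
      Polynomial.coeff_zero] at h1
    rw [Finset.sum_eq_single m0] at h1
    · simp at h1
      exact (mem_support_iff.mp hm0) h1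
    · intro m hm hne
      rw [if_neg, mul_zero]
      intro heq
      exact hne (kron_inj hQ _ _ (hb m hm) (hb m0 hm0) heq.symm)
    · exact fun hn => absurd hm0 hn
  · rw [e]
    refine Polynomial.natDegree_sum_le_of_forall_le _ _ fun m hm => ?_
    refine (Polynomial.natDegree_C_mul_X_pow_le _ _).trans ?_
    calc ∑ x : Fin (n+1), Q ^ x.1 * m x ≤ ∑ x : Fin (n+1), Q ^ n * m x := by
          refine Finset.sum_le_sum fun x _ => Nat.mul_le_mul_right _ ?_
          exact Nat.pow_le_pow_right (by omega) (by omega)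
      _ = Q ^ n * m.degree := by rw [← Finset.mul_sum, Finsupp.degree_eq_sum]
      _ ≤ _ := by
          rw [mul_comm]
          exact Nat.mul_le_mul_right _ (le_totalDegree hm)

lemma nilp_bound {K A : Type*} [Field K] [CommRing A] [Algebra K A] (y : A) (hy : IsNilpotent y)
    (q : Polynomial K) (hq : q ≠ 0) (h : Polynomial.aeval y q = 0) : y ^ q.natDegree = 0 := by
  obtain ⟨r, hr, hr2⟩ := q.exists_eq_pow_rootMultiplicity_mul_and_not_dvd hq 0
  rw [Polynomial.C_0, sub_zero] at hr hr2
  set m := q.rootMultiplicity 0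
  have hc : r.coeff 0 ≠ 0 := fun h0 => hr2 (Polynomial.X_dvd_iff.mpr h0)
  have hm : m ≤ q.natDegree := by
    rw [hr, mul_comm, Polynomial.natDegree_mul_X_pow _ (by rintro rfl; simp at hc)]
    omega
  have hu : IsUnit (Polynomial.aeval y r) := by
    have e : Polynomial.aeval y r = y * Polynomial.aeval y r.divX + algebraMap K A (r.coeff 0) := by
      have := congrArg (Polynomial.aeval y) r.X_mul_divX_add
      rw [map_add, map_mul, Polynomial.aeval_X, Polynomial.aeval_C] at this
      exact this.symm
    rw [e, add_comm]
    have h1 : IsNilpotent (y * Polynomial.aeval y r.divX) :=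
      Commute.isNilpotent_mul_right (Commute.all _ _) hy
    have h2 : IsUnit (algebraMap K A (r.coeff 0)) := (IsUnit.mk0 _ hc).map _
    exact h1.isUnit_add_left_of_commute h2 (Commute.all _ _)
  have h3 : y ^ m * Polynomial.aeval y r = 0 := by
    rw [hr] at h; simpa using h
  have h4 : y ^ m = 0 := by simpa using hu.mul_left_eq_zero.mp h3
  exact pow_eq_zero_of_le hm h4

lemma not_algInd {R : Type} [CommRing R] [IsDomain R] {ι : Type} [Fintype ι] (n : ℕ)
    (hn : Fintype.card ι ≤ n) (y : Fin (n+1) → MvPolynomial ι R) : ¬ AlgebraicIndependent R y := by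
  intro h
  have h1 := h.cardinalMk_le_trdeg
  rw [MvPolynomial.trdeg_of_isDomain] at h1
  simp at h1
  have : n + 1 ≤ Fintype.card ι := by exact_mod_cast h1
  omega

/-- Existence of quasi-fixed points (Borisov and Sapir), in terms of maximal ideals. -/
theorem quasi_fixed {p : ℕ} [Fact p.Prime] {ι : Type} [Fintype ι]
    (σ : MvPolynomial ι (ZMod p) →ₐ[ZMod p] MvPolynomial ι (ZMod p))
    (n : ℕ) (hn : Fintype.card ι ≤ n) (D : MvPolynomial ι (ZMod p)) (hD : (σ^n) D ≠ 0) :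
    ∃ (M : Ideal (MvPolynomial ι (ZMod p))) (e : ℕ), M.IsMaximal ∧ D ∉ M ∧
      ∀ g, σ g - g ^ (p ^ e) ∈ M := by
  have hp : 1 < p := (Fact.out : p.Prime).one_lt
  obtain ⟨h, hh0, hh⟩ : ∃ h : MvPolynomial (Fin (n+1)) (ZMod p), h ≠ 0 ∧
      aeval (fun j : Fin (n+1) => (σ ^ j.1) D) h = 0 := by
    have := not_algInd n hn (fun j : Fin (n+1) => (σ ^ j.1) D)
    rw [algebraicIndependent_iff] at this
    push Not at this
    obtain ⟨h, h1, h2⟩ := this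
    exact ⟨h, h2, h1⟩
  set d := h.totalDegree with hd
  set B := d + (((σ^n) D) ^ d).totalDegree + ∑ i, (σ (X i)).totalDegree with hB
  obtain ⟨e, he⟩ : ∃ e, B < p ^ e := ⟨B, Nat.lt_pow_self hp⟩
  set Q := p ^ e with hQ
  have he1 : 1 < Q := by
    by_contra hcon
    have hQ1 : Q = 1 := by have : 0 < Q := by positivity
                           omega
    have hB0 : B = 0 := by omega
    have hd0 : h.totalDegree = 0 := by omega
    rw [totalDegree_eq_zero_iff_eq_C] at hd0
    rw [hd0] at hh
    simp only [algHom_C] at hh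
    rw [map_eq_zero_iff _ (by simpa [algebraMap_eq] using C_injective ι (ZMod p))] at hh
    rw [hh, C_0] at hd0
    exact hh0 hd0
  set f : ι → MvPolynomial ι (ZMod p) := fun i => σ (X i)
  set I := Ideal.span (Set.range fun i => X i ^ Q - f i) with hI
  have hf : ∀ i, (f i).totalDegree < Q := fun i => by
    have : (f i).totalDegree ≤ ∑ i, (f i).totalDegree :=
      Finset.single_le_sum (f := fun i => (f i).totalDegree) (fun _ _ => Nat.zero_le _) (Finset.mem_univ i)
    have h2 : ∑ i, (f i).totalDegree ≤ B := by rw [hB]; exact Nat.le_add_left _ _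
    omega
  have key : ∀ g, σ g - g ^ Q ∈ I := by
    intro g
    have : (Ideal.Quotient.mk I).comp (σ : MvPolynomial ι (ZMod p) →+* MvPolynomial ι (ZMod p)) =
        (Ideal.Quotient.mk I).comp (iterateFrobenius (MvPolynomial ι (ZMod p)) p e) := by
      refine MvPolynomial.ringHom_ext ?_ ?_
      · intro r
        simp only [RingHom.comp_apply, RingHom.coe_coe, iterateFrobenius_def, algHom_C,
          algebraMap_eq, ← C_pow, ZMod.pow_card_pow]
      · intro i
        simp only [RingHom.comp_apply, RingHom.coe_coe, iterateFrobenius_def]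
        rw [eq_comm, Ideal.Quotient.eq]
        exact Ideal.subset_span ⟨i, rfl⟩
    have h2 := congrArg (fun F => F g) this
    simp only [RingHom.comp_apply, RingHom.coe_coe, iterateFrobenius_def] at h2
    exact Ideal.Quotient.eq.mp h2
  have key2 : ∀ j g, Ideal.Quotient.mk I ((σ ^ j) g) = (Ideal.Quotient.mk I g) ^ (Q ^ j) := by
    intro j
    induction j with
    | zero => intro g; simp
    | succ j ih =>
      intro g
      rw [pow_succ', AlgHom.mul_apply, Ideal.Quotient.eq.mpr (key _), map_pow, ih, ← pow_mul,
        pow_succ]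
  by_cases hnil : IsNilpotent (Ideal.Quotient.mk I D)
  · exfalso
    obtain ⟨hq0, hqd⟩ := kron_ne_zero h hh0 he1 (by omega)
    set q := aeval (fun j : Fin (n+1) => (Polynomial.X : Polynomial (ZMod p)) ^ (Q ^ j.1)) h with hq
    have hqy : Polynomial.aeval (Ideal.Quotient.mk I D) q = 0 := by
      have e1 : Polynomial.aeval (Ideal.Quotient.mk I D) q =
          aeval (fun j : Fin (n+1) => (Ideal.Quotient.mk I D) ^ (Q ^ j.1)) h := by
        rw [hq, ← AlgHom.comp_apply, comp_aeval]
        simp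
      have e2 : (Ideal.Quotient.mkₐ (ZMod p) I) (aeval (fun j : Fin (n+1) => (σ ^ j.1) D) h) =
          aeval (fun j : Fin (n+1) => (Ideal.Quotient.mk I D) ^ (Q ^ j.1)) h := by
        rw [← AlgHom.comp_apply, comp_aeval]
        simp only [Ideal.Quotient.mkₐ_eq_mk, key2]
      rw [e1, ← e2, hh, map_zero]
    have hy := nilp_bound _ hnil q hq0 hqy
    have hy2 : (Ideal.Quotient.mk I D) ^ (d * Q ^ n) = 0 := pow_eq_zero_of_le hqd hy
    have hmem : ((σ ^ n) D) ^ d ∈ I := by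
      rw [← Ideal.Quotient.eq_zero_iff_mem, map_pow, key2, ← pow_mul, mul_comm, hy2]
    have := eq_zero_of_mem f Q hf _ hmem (by omega)
    exact hD (eq_zero_of_pow_eq_zero this)
  · have hrad : D ∉ I.radical := by
      rintro ⟨m, hm⟩
      exact hnil ⟨m, by rw [← map_pow]; exact Ideal.Quotient.eq_zero_iff_mem.mpr hm⟩
    rw [Ideal.radical_eq_jacobson, Ideal.jacobson, Submodule.mem_sInf] at hrad
    push Not at hrad
    obtain ⟨M, ⟨hM1, hM2⟩, hM3⟩ := hrad
    exact ⟨M, e, hM2, hM3, fun g => hM1 (key g)⟩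

end BSapir

namespace BSapir
open MvPolynomial

section Unram
variable {p : ℕ} [Fact p.Prime] {B : Type} [CommRing B] [Algebra (ZMod p) B]
  (σ : B →ₐ[ZMod p] B) (m : Ideal B)

lemma surj_mod [m.IsMaximal] [Finite (B ⧸ m)] (e : ℕ) (hσ : ∀ b, σ b - b ^ (p ^ e) ∈ m) (b : B) :
    ∃ c, b - σ c ∈ m := by
  letI : Field (B ⧸ m) := Ideal.Quotient.field m
  have : CharP (B ⧸ m) p :=
    charP_of_injective_algebraMap (algebraMap (ZMod p) (B ⧸ m)).injective p
  have hinj : Function.Injective (iterateFrobenius (B ⧸ m) p e) := RingHom.injective _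
  have hs := Finite.surjective_of_injective hinj
  obtain ⟨y, hy⟩ := hs (Ideal.Quotient.mk m b)
  obtain ⟨c, rfl⟩ := Ideal.Quotient.mk_surjective y
  refine ⟨c, ?_⟩
  rw [iterateFrobenius_def, ← map_pow] at hy
  rw [← Ideal.Quotient.eq, ← hy, eq_comm]
  exact Ideal.Quotient.eq.mpr (hσ c)

lemma mem_iff [m.IsMaximal] (e : ℕ) (hσ : ∀ b, σ b - b ^ (p ^ e) ∈ m) (b : B) :
    σ b ∈ m ↔ b ∈ m := by
  have hp : p ^ e ≠ 0 := pow_ne_zero _ (Fact.out : p.Prime).ne_zero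
  constructor
  · intro h
    have := m.sub_mem h (hσ b)
    rw [sub_sub_cancel] at this
    exact (Ideal.IsPrime.pow_mem_iff_mem inferInstance _ (Nat.pos_of_ne_zero hp)).mp this
  · intro h
    have := m.add_mem (hσ b) (Ideal.pow_mem_of_mem m h _ (Nat.pos_of_ne_zero hp))
    rwa [sub_add_cancel] at this

lemma surj_J [m.IsMaximal] [Finite (B ⧸ m)] (e : ℕ) (hσ : ∀ b, σ b - b ^ (p ^ e) ∈ m)
    (s : Set B) (hs : Algebra.adjoin (ZMod p) s = ⊤)
    (hsep : ∀ x ∈ s, ∃ H : Polynomial B, (H.map (σ : B →+* B)).eval x = 0 ∧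
      (H.map (σ : B →+* B)).derivative.eval x ∉ m) (b : B) :
    ∃ c, b - σ c ∈ Ideal.map σ m ⊔ m ^ 2 := by
  set J := Ideal.map σ m ⊔ m ^ 2 with hJ
  have hb : b ∈ Algebra.adjoin (ZMod p) s := hs ▸ Algebra.mem_top
  induction hb using Algebra.adjoin_induction with
  | mem x hx =>
    obtain ⟨H, h0, h1⟩ := hsep x hx
    obtain ⟨c, hc⟩ := surj_mod σ m e hσ x
    refine ⟨c, ?_⟩
    set ε := x - σ c with hε
    set Hσ := H.map (σ : B →+* B) with hHσ
    have hxe : x = σ c + ε := by rw [hε]; ring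
    -- Taylor expansion
    obtain ⟨k, hk⟩ := Polynomial.binomExpansion Hσ (σ c) ε
    rw [← hxe, h0] at hk
    have he2 : ε ^ 2 ∈ m ^ 2 := Ideal.pow_mem_pow hc 2
    have hev : Hσ.eval (σ c) = σ (H.eval c) := by
      rw [hHσ]
      exact Polynomial.eval_map_apply (σ : B →+* B) c
    have hdev : Hσ.derivative.eval (σ c) ∉ m := by
      intro hmem
      apply h1
      have hd := Polynomial.sub_dvd_eval_sub x (σ c) Hσ.derivative
      have h2 := Ideal.mem_of_dvd m hd hc
      have := m.add_mem h2 hmem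
      rwa [sub_add_cancel] at this
    set δ := Hσ.derivative.eval (σ c)
    have hmem : σ (H.eval c) ∈ m := by
      rw [← hev]
      have : Hσ.eval (σ c) = -(δ * ε) - k * ε ^ 2 := by linear_combination -hk
      rw [this]
      exact m.sub_mem (m.neg_mem (m.mul_mem_left _ hc))
        (m.mul_mem_left _ (Ideal.pow_le_self two_ne_zero he2))
    have hmem2 : σ (H.eval c) ∈ J :=
      Ideal.mem_sup_left (Ideal.mem_map_of_mem σ ((mem_iff σ m e hσ _).mp hmem))
    have hδε : δ * ε ∈ J := by
      have : δ * ε = - σ (H.eval c) - k * ε ^ 2 := by rw [← hev]; linear_combination -hk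
      rw [this]
      exact J.sub_mem (J.neg_mem hmem2) (J.mul_mem_left _ (Ideal.mem_sup_right he2))
    obtain ⟨u, hu⟩ := Ideal.IsMaximal.exists_inv (inferInstance : m.IsMaximal) hdev
    obtain ⟨i, hi, hui⟩ := hu
    have : ε = u * (δ * ε) + i * ε := by linear_combination -ε * hui
    rw [this]
    refine J.add_mem (J.mul_mem_left _ hδε) (Ideal.mem_sup_right ?_)
    rw [pow_two]
    exact Ideal.mul_mem_mul hi hc
  | algebraMap r => exact ⟨algebraMap _ _ r, by simp⟩
  | add x y _ _ hx hy =>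
    obtain ⟨c, hc⟩ := hx
    obtain ⟨d, hd⟩ := hy
    refine ⟨c + d, ?_⟩
    have := J.add_mem hc hd
    rw [map_add]
    convert this using 1
    ring
  | mul x y _ _ hx hy =>
    obtain ⟨c, hc⟩ := hx
    obtain ⟨d, hd⟩ := hy
    refine ⟨c * d, ?_⟩
    have := J.add_mem (J.mul_mem_left y hc) (J.mul_mem_left (σ c) hd)
    rw [map_mul]
    convert this using 1
    ring

/-- If `σ` is unramified at `m`, then it is surjective modulo all powers of `m`. -/
lemma surj_pow [m.IsMaximal] [Finite (B ⧸ m)] (e : ℕ) (hσ : ∀ b, σ b - b ^ (p ^ e) ∈ m)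
    (s : Set B) (hs : Algebra.adjoin (ZMod p) s = ⊤)
    (hsep : ∀ x ∈ s, ∃ H : Polynomial B, (H.map (σ : B →+* B)).eval x = 0 ∧
      (H.map (σ : B →+* B)).derivative.eval x ∉ m) (j : ℕ) (b : B) :
    ∃ c, b - σ c ∈ m ^ j := by
  have hpow : ∀ i, ∀ c ∈ m ^ i, σ c ∈ m ^ i := by
    intro i c hc
    have h1 : Ideal.map σ (m ^ i) ≤ m ^ i := by
      rw [Ideal.map_pow]
      refine Ideal.pow_right_mono ?_ i
      rw [Ideal.map_le_iff_le_comap]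
      intro x hx
      exact (mem_iff σ m e hσ x).mpr hx
    exact h1 (Ideal.mem_map_of_mem σ hc)
  have h1 : ∀ b ∈ m, ∃ c ∈ m, b - σ c ∈ m ^ 2 := by
    have hmap : ∀ b ∈ Ideal.map σ m, ∃ c ∈ m, b - σ c ∈ m ^ 2 := by
      intro b hb
      refine Submodule.span_induction (p := fun b _ => ∃ c ∈ m, b - σ c ∈ m ^ 2) ?_ ?_ ?_ ?_ hb
      · rintro _ ⟨c, hc, rfl⟩
        exact ⟨c, hc, by simp⟩
      · exact ⟨0, m.zero_mem, by simp⟩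
      · rintro x y _ _ ⟨c, hc, hc'⟩ ⟨d, hd, hd'⟩
        refine ⟨c + d, m.add_mem hc hd, ?_⟩
        have := (m ^ 2).add_mem hc' hd'
        rw [map_add]
        convert this using 1
        ring
      · rintro r x _ ⟨c, hc, hc'⟩
        obtain ⟨d, hd⟩ := surj_mod σ m e hσ r
        refine ⟨d * c, m.mul_mem_left _ hc, ?_⟩
        have h2 : (r - σ d) * σ c ∈ m ^ 2 := by
          rw [pow_two]; exact Ideal.mul_mem_mul hd ((mem_iff σ m e hσ c).mpr hc)
        have := (m ^ 2).add_mem ((m ^ 2).mul_mem_left r hc') h2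
        rw [map_mul, smul_eq_mul]
        convert this using 1
        ring
    intro b hb
    obtain ⟨c, hc⟩ := surj_J σ m e hσ s hs hsep b
    have hJm : Ideal.map σ m ⊔ m ^ 2 ≤ m := by
      refine sup_le ?_ (Ideal.pow_le_self two_ne_zero)
      rw [Ideal.map_le_iff_le_comap]
      intro x hx
      exact (mem_iff σ m e hσ x).mpr hx
    have hcm : c ∈ m := by
      rw [← mem_iff σ m e hσ]
      have := m.sub_mem hb (hJm hc)
      rwa [sub_sub_cancel] at this
    obtain ⟨y, hy, z, hz, hyz⟩ := Submodule.mem_sup.mp hc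
    obtain ⟨d, hd, hd'⟩ := hmap y hy
    refine ⟨c + d, m.add_mem hcm hd, ?_⟩
    have := (m ^ 2).add_mem hd' hz
    rw [map_add]
    convert this using 1
    linear_combination -hyz
  have h2 : ∀ i, ∀ b ∈ m ^ i, ∃ c ∈ m ^ i, b - σ c ∈ m ^ (i + 1) := by
    intro i
    induction i with
    | zero =>
      intro b _
      obtain ⟨c, hc⟩ := surj_mod σ m e hσ b
      exact ⟨c, by simp, by simpa using hc⟩
    | succ i ih =>
      intro b hb
      rw [pow_succ] at hb
      refine Submodule.mul_induction_on hb ?_ ?_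
      · intro x hx y hy
        obtain ⟨c, hc, hc'⟩ := ih x hx
        obtain ⟨d, hd, hd'⟩ := h1 y hy
        refine ⟨c * d, ?_, ?_⟩
        · rw [pow_succ]; exact Ideal.mul_mem_mul hc hd
        · have e1 : (x - σ c) * y ∈ m ^ (i + 1 + 1) := by
            rw [pow_succ _ (i+1)]; exact Ideal.mul_mem_mul hc' hy
          have e2 : σ c * (y - σ d) ∈ m ^ (i + 1 + 1) := by
            rw [add_assoc, pow_add _ i]; exact Ideal.mul_mem_mul (hpow i c hc) hd'
          have := (m ^ (i+1+1)).add_mem e1 e2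
          rw [map_mul]
          convert this using 1
          ring
      · rintro x y ⟨c, hc, hc'⟩ ⟨d, hd, hd'⟩
        refine ⟨c + d, Ideal.add_mem _ hc hd, ?_⟩
        have := Ideal.add_mem _ hc' hd'
        rw [map_add]
        convert this using 1
        ring
  induction j with
  | zero => exact ⟨0, by simp⟩
  | succ j ih =>
    obtain ⟨c, hc⟩ := ih
    obtain ⟨d, hd, hd'⟩ := h2 j _ hc
    refine ⟨c + d, ?_⟩
    rw [map_add]
    convert hd' using 1
    ring

end Unram
end BSapir

namespace BSapir
open MvPolynomial

section PAut
variable {p : ℕ} [Fact p.Prime] {R : Type} [CommRing R] [Algebra (ZMod p) R]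

lemma fil_mul (n : Ideal R) (i j : ℕ) (x y : Matrix (Fin 2) (Fin 2) R)
    (hx : ∀ a b, x a b ∈ n ^ i) (hy : ∀ a b, y a b ∈ n ^ j) : ∀ a b, (x * y) a b ∈ n ^ (i + j) := by
  intro a b
  rw [Matrix.mul_apply, pow_add]
  exact Ideal.sum_mem _ fun c _ => Ideal.mul_mem_mul (hx a c) (hy c b)

lemma fil_step (n : Ideal R) (α : RingAut (Matrix (Fin 2) (Fin 2) R))
    (h : ∀ z a b, (α z - z) a b ∈ n ^ 2) (i : ℕ) :
    ∀ z : Matrix (Fin 2) (Fin 2) R, (∀ a b, z a b ∈ n ^ i) → ∀ a b, (α z - z) a b ∈ n ^ (i + 1) := by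
  induction i with
  | zero =>
    intro z _ a b
    exact Ideal.pow_le_pow_right (by norm_num) (h z a b)
  | succ i ih =>
    have hs : ∀ (c d : Fin 2), ∀ r ∈ n ^ (i + 1), ∀ a b,
        (α (Matrix.single c d r) - Matrix.single c d r) a b ∈ n ^ (i + 1 + 1) := by
      intro c d r hr
      rw [pow_succ] at hr
      refine Submodule.mul_induction_on hr ?_ ?_
      · intro x hx y hy
        set u : Matrix (Fin 2) (Fin 2) R := Matrix.single c d x with hu
        set v : Matrix (Fin 2) (Fin 2) R := Matrix.single d d y with hv
        have huv : Matrix.single c d (x * y) = u * v := by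
          rw [hu, hv, Matrix.single_mul_single_same]
        have hu1 : ∀ a b, u a b ∈ n ^ i := by
          intro a b
          rw [hu, Matrix.single_apply]
          split_ifs
          · exact hx
          · exact Ideal.zero_mem _
        have hv1 : ∀ a b, v a b ∈ n ^ 1 := by
          intro a b
          rw [hv, Matrix.single_apply, pow_one]
          split_ifs
          · exact hy
          · exact Ideal.zero_mem _
        have hαv : ∀ a b, (α v) a b ∈ n ^ 1 := by
          intro a b
          have := Ideal.add_mem _ (Ideal.pow_le_pow_right (by norm_num) (h v a b)) (hv1 a b)
          simpa using this
        intro a b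
        have e : α (u * v) - u * v = (α u - u) * α v + u * (α v - v) := by
          rw [map_mul]; noncomm_ring
        rw [huv, e, Matrix.add_apply]
        exact Ideal.add_mem _ (fil_mul n (i+1) 1 _ _ (ih u hu1) hαv a b)
          (fil_mul n i 2 _ _ hu1 (h v) a b)
      · intro x y hx hy a b
        have := Ideal.add_mem _ (hx a b) (hy a b)
        rw [Matrix.single_add, map_add]
        simp only [Matrix.sub_apply, Matrix.add_apply] at this ⊢
        convert this using 1
        ring
    intro z hz a b
    have hdec := Matrix.matrix_eq_sum_single z
    have : α z - z = ∑ c, ∑ d, (α (Matrix.single c d (z c d)) - Matrix.single c d (z c d)) := by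
      conv_lhs => rw [hdec]
      simp only [map_sum, Finset.sum_sub_distrib]
    rw [this, Matrix.sum_apply]
    refine Ideal.sum_mem _ fun c _ => ?_
    rw [Matrix.sum_apply]
    exact Ideal.sum_mem _ fun d _ => hs c d _ (hz c d) a b

/-- Automorphisms of `M₂(R)` that are trivial mod `n ^ 2`, `n` nilpotent, have `p`-power order. -/
lemma aut_p_power [Nontrivial R] (n : Ideal R) (j : ℕ) (hn : n ^ j = ⊥)
    (α : RingAut (Matrix (Fin 2) (Fin 2) R))
    (h : ∀ z a b, (α z - z) a b ∈ n ^ 2) : ∃ k : ℕ, α ^ (p ^ k) = 1 := by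
  let L : Module.End (ZMod p) (Matrix (Fin 2) (Fin 2) R) := AddMonoidHom.toZModLinearMap p (α : Matrix (Fin 2) (Fin 2) R →+ Matrix (Fin 2) (Fin 2) R)
  have hL : ∀ z, L z = α z := fun z => rfl
  have : CharP (Module.End (ZMod p) (Matrix (Fin 2) (Fin 2) R)) p :=
    charP_of_injective_algebraMap (algebraMap (ZMod p) (Module.End (ZMod p) (Matrix (Fin 2) (Fin 2) R))).injective p
  have hδ : ∀ i z a b, ((L - 1) ^ i) z a b ∈ n ^ i := by
    intro i
    induction i with
    | zero => intro z a b; simp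
    | succ i ih =>
      intro z a b
      rw [pow_succ' (L - 1) i, Module.End.mul_apply, LinearMap.sub_apply, hL, Module.End.one_apply]
      exact fil_step n α h i _ (ih z) a b
  have hδ0 : (L - 1) ^ j = 0 := by
    ext z a b
    have := hδ j z a b
    rw [hn] at this
    simpa using this
  have hpj : j ≤ p ^ j := (Nat.lt_pow_self (Fact.out : p.Prime).one_lt).le
  have h1 : (L - 1) ^ (p ^ j) = 0 := pow_eq_zero_of_le hpj hδ0
  rw [sub_pow_char_pow_of_commute _ _ (Commute.one_right L), one_pow, sub_eq_zero] at h1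
  refine ⟨j, ?_⟩
  have hLi : ∀ i z, (L ^ i) z = (α ^ i) z := by
    intro i
    induction i with
    | zero => intro z; rfl
    | succ i ih => intro z; rw [pow_succ', pow_succ', Module.End.mul_apply, ih, hL, RingAut.mul_apply]
  ext1 z
  rw [← hLi, h1]; rfl

end PAut
end BSapir

namespace BSapir
open MvPolynomial

section Words
variable {k : ℕ} {R : Type} [CommRing R]

/-- Evaluation of a letter, the inverse letter being sent to the adjugate. -/
def evL (X : Fin k → Matrix (Fin 2) (Fin 2) R) (l : Fin k × Bool) : Matrix (Fin 2) (Fin 2) R :=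
  if l.2 then X l.1 else (X l.1).adjugate

/-- Evaluation of a word, inverse letters being sent to adjugates. -/
def ev (X : Fin k → Matrix (Fin 2) (Fin 2) R) (L : List (Fin k × Bool)) :
    Matrix (Fin 2) (Fin 2) R := (L.map (evL X)).prod

variable (X : Fin k → Matrix (Fin 2) (Fin 2) R)

@[simp] lemma ev_nil : ev X [] = 1 := rfl
@[simp] lemma ev_cons (l : Fin k × Bool) (L : List (Fin k × Bool)) :
    ev X (l :: L) = evL X l * ev X L := by simp [ev]
@[simp] lemma ev_append (L L' : List (Fin k × Bool)) : ev X (L ++ L') = ev X L * ev X L' := by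
  simp [ev]

lemma adj_adj (M : Matrix (Fin 2) (Fin 2) R) : M.adjugate.adjugate = M := by
  rw [Matrix.adjugate_fin_two M, Matrix.adjugate_fin_two]
  ext a b
  fin_cases a <;> fin_cases b <;> simp

lemma evL_inv (x : Fin k) (b : Bool) : evL X (x, !b) = (evL X (x, b)).adjugate := by
  cases b <;> simp [evL, adj_adj]

lemma ev_invRev (L : List (Fin k × Bool)) : ev X (FreeGroup.invRev L) = (ev X L).adjugate := by
  induction L with
  | nil => simp
  | cons l L ih =>
    rw [ev_cons, Matrix.adjugate_mul_distrib, ← ih, ← evL_inv]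
    simp [FreeGroup.invRev]

lemma map_ev {R' : Type} [CommRing R'] (f : R →+* R') (L : List (Fin k × Bool)) :
    f.mapMatrix (ev X L) = ev (fun i => f.mapMatrix (X i)) L := by
  induction L with
  | nil => simp
  | cons l L ih =>
    rw [ev_cons, ev_cons, map_mul, ih]
    congr 1
    unfold evL
    split_ifs
    · rfl
    · exact RingHom.map_adjugate f _

lemma det_evL (l : Fin k × Bool) : (evL X l).det = (X l.1).det := by
  unfold evL
  split_ifs
  · rfl
  · simp [Matrix.det_adjugate]

lemma det_ev_mem (S : Submonoid R) (hS : ∀ i, (X i).det ∈ S) (L : List (Fin k × Bool)) :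
    (ev X L).det ∈ S := by
  induction L with
  | nil => simp
  | cons l L ih =>
    rw [ev_cons, Matrix.det_mul, det_evL]
    exact S.mul_mem (hS _) ih

lemma ev_step (x : Fin k) (b : Bool) : evL X (x, b) * evL X (x, !b) = (X x).det • 1 := by
  rw [evL_inv, Matrix.mul_adjugate, det_evL]

lemma ev_red (S : Submonoid R) (hS : ∀ i, (X i).det ∈ S) (L L' : List (Fin k × Bool))
    (h : FreeGroup.Red L L') : ∃ c ∈ S, ev X L = c • ev X L' := by
  induction h with
  | refl => exact ⟨1, S.one_mem, by simp⟩
  | tail _ hs ih =>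
    obtain ⟨c, hc, e⟩ := ih
    cases hs with
    | @not L₁ L₂ x b =>
      refine ⟨c * (X x).det, S.mul_mem hc (hS x), ?_⟩
      rw [e, ev_append, ev_cons, ev_cons, ← mul_assoc (evL X (x, b)), ev_step, ev_append, mul_smul,
        smul_mul_assoc, one_mul, mul_smul_comm]

/-- Substitution of words in a word. -/
def subst (w : Fin k → List (Fin k × Bool)) (L : List (Fin k × Bool)) : List (Fin k × Bool) :=
  L.flatMap fun l => if l.2 then w l.1 else FreeGroup.invRev (w l.1)

lemma ev_subst (w : Fin k → List (Fin k × Bool)) (L : List (Fin k × Bool)) :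
    ev (fun i => ev X (w i)) L = ev X (subst w L) := by
  induction L with
  | nil => simp [subst]
  | cons l L ih =>
    have : subst w (l :: L) = (if l.2 then w l.1 else FreeGroup.invRev (w l.1)) ++ subst w L := by
      simp [subst]
    rw [this, ev_append, ev_cons, ih]
    congr 1
    unfold evL
    split_ifs
    · rfl
    · exact (ev_invRev X _).symm

lemma mk_cons {α : Type*} (l : α × Bool) (L : List (α × Bool)) :
    FreeGroup.mk (l :: L) = (if l.2 then FreeGroup.of l.1 else (FreeGroup.of l.1)⁻¹) *
      FreeGroup.mk L := by
  obtain ⟨i, b⟩ := l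
  cases b
  · simp [FreeGroup.of, FreeGroup.inv_mk, FreeGroup.invRev, FreeGroup.mul_mk]
  · simp [FreeGroup.of, FreeGroup.mul_mk]

lemma mk_subst (φ : FreeGroup (Fin k) →* FreeGroup (Fin k)) (w : Fin k → List (Fin k × Bool))
    (hw : ∀ i, FreeGroup.mk (w i) = φ (FreeGroup.of i)) (L : List (Fin k × Bool)) :
    FreeGroup.mk (subst w L) = φ (FreeGroup.mk L) := by
  induction L with
  | nil => simp [subst, ← FreeGroup.one_eq_mk]
  | cons l L ih =>
    have : subst w (l :: L) = (if l.2 then w l.1 else FreeGroup.invRev (w l.1)) ++ subst w L := by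
      simp [subst]
    rw [this, ← FreeGroup.mul_mk, ih, mk_cons, map_mul]
    congr 1
    split_ifs
    · exact hw _
    · rw [← FreeGroup.inv_mk, hw, map_inv]

/-- Conjugation by a unit. -/
def conjAut {A : Type} [Ring A] (u : Aˣ) : RingAut A where
  toFun z := u * z * (u⁻¹ : Aˣ)
  invFun z := (u⁻¹ : Aˣ) * z * u
  left_inv z := by simp [mul_assoc]
  right_inv z := by simp [mul_assoc]
  map_mul' x y := by simp [mul_assoc]
  map_add' x y := by simp [mul_add, add_mul]

lemma conjAut_mul {A : Type} [Ring A] (u : Aˣ) (z : A) : conjAut u z * u = u * z := by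
  simp [conjAut, mul_assoc]

lemma conjAut_inv_mul {A : Type} [Ring A] (u : Aˣ) (z : A) : u * (conjAut u)⁻¹ z = z * u := by
  change (u : A) * ((u⁻¹ : Aˣ) * z * u) = z * u
  simp [← mul_assoc]

end Words

section Torus
variable {k : ℕ} {R : Type} [CommRing R] (φ : FreeGroup (Fin k) →* FreeGroup (Fin k))

/-- The base group inside the mapping torus. -/
def base : FreeGroup (Fin k) →* MappingTorus k φ :=
  (PresentedGroup.mk (mappingTorusRels k φ)).comp (FreeGroup.map Option.some)

/-- The stable letter. -/
def stab : MappingTorus k φ := PresentedGroup.of none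

lemma stab_rel (w : FreeGroup (Fin k)) : stab φ * base φ w * (stab φ)⁻¹ = base φ (φ w) := by
  have h : (MulAut.conj (stab φ)).toMonoidHom.comp (base φ) = (base φ).comp φ := by
    ext i
    have h1 := PresentedGroup.one_of_mem (rels := mappingTorusRels k φ) ⟨i, rfl⟩
    rw [map_mul, map_mul, map_mul, map_inv, map_inv, mul_inv_eq_one] at h1
    exact h1
  exact DFunLike.congr_fun h w

lemma torus_hom {A : Type*} [Group A] (f : FreeGroup (Fin k) →* A) (t : A)
    (h : ∀ i, t * f (FreeGroup.of i) * t⁻¹ = f (φ (FreeGroup.of i))) :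
    ∃ Ψ : MappingTorus k φ →* A, (∀ w, Ψ (base φ w) = f w) ∧ Ψ (stab φ) = t := by
  let g : Option (Fin k) → A := fun o => o.elim t fun i => f (FreeGroup.of i)
  have hg : ∀ w, FreeGroup.lift g (FreeGroup.map Option.some w) = f w := by
    intro w
    have : (FreeGroup.lift g).comp (FreeGroup.map Option.some) = f := by
      ext i; simp [g]
    exact DFunLike.congr_fun this w
  have hr : ∀ r ∈ mappingTorusRels k φ, FreeGroup.lift g r = 1 := by
    rintro r ⟨i, rfl⟩
    rw [map_mul, map_mul, map_mul, map_inv, map_inv, hg, hg, mul_inv_eq_one, ← h]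
    simp [g]
  refine ⟨PresentedGroup.toGroup hr, ?_, ?_⟩
  · intro w
    rw [← hg w]
    rfl
  · exact PresentedGroup.toGroup.of hr

lemma normal_form (g : MappingTorus k φ) : ∃ (a b : ℕ) (w : FreeGroup (Fin k)),
    g = (stab φ)⁻¹ ^ a * base φ w * stab φ ^ b := by
  obtain ⟨x, rfl⟩ := PresentedGroup.mk_surjective _ g
  obtain ⟨L, rfl⟩ := Quot.mk_surjective x
  change ∃ (a b : ℕ) (w : FreeGroup (Fin k)),
    PresentedGroup.mk _ (FreeGroup.mk L) = (stab φ)⁻¹ ^ a * base φ w * stab φ ^ b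
  have hpow : ∀ (a : ℕ) (w : FreeGroup (Fin k)), ∃ w', base φ w * (stab φ)⁻¹ ^ a =
      (stab φ)⁻¹ ^ a * base φ w' := by
    intro a
    induction a with
    | zero => intro w; exact ⟨w, by simp⟩
    | succ a ih =>
      intro w
      obtain ⟨w', hw'⟩ := ih (φ w)
      refine ⟨w', ?_⟩
      rw [← stab_rel] at hw'
      calc base φ w * (stab φ)⁻¹ ^ (a + 1)
          = (stab φ)⁻¹ * (stab φ * base φ w * (stab φ)⁻¹ * (stab φ)⁻¹ ^ a) := by
            rw [pow_succ']; group
        _ = _ := by rw [hw', pow_succ', mul_assoc]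
  have hbase : ∀ v : FreeGroup (Fin k), ∀ g : MappingTorus k φ,
      (∃ (a b : ℕ) (w : FreeGroup (Fin k)), g = (stab φ)⁻¹ ^ a * base φ w * stab φ ^ b) →
      ∃ (a b : ℕ) (w : FreeGroup (Fin k)),
        base φ v * g = (stab φ)⁻¹ ^ a * base φ w * stab φ ^ b := by
    rintro v _ ⟨a, b, w, rfl⟩
    obtain ⟨w', hw'⟩ := hpow a v
    refine ⟨a, b, w' * w, ?_⟩
    rw [map_mul, ← mul_assoc, ← mul_assoc, hw']
    simp only [mul_assoc]
  induction L with
  | nil => exact ⟨0, 0, 1, by rw [← FreeGroup.one_eq_mk]; simp⟩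
  | cons l L ih =>
    rw [mk_cons, map_mul]
    obtain ⟨o, s⟩ := l
    cases o with
    | some i =>
      cases s
      · exact hbase (FreeGroup.of i)⁻¹ _ ih
      · exact hbase (FreeGroup.of i) _ ih
    | none =>
      obtain ⟨a, b, w, hw⟩ := ih
      rw [hw]
      cases s
      · refine ⟨a + 1, b, w, ?_⟩
        change (stab φ)⁻¹ * _ = _
        rw [pow_succ']; simp only [mul_assoc]
      · change ∃ (a' b' : ℕ) (w' : FreeGroup (Fin k)),
          stab φ * ((stab φ)⁻¹ ^ a * base φ w * stab φ ^ b) =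
            (stab φ)⁻¹ ^ a' * base φ w' * stab φ ^ b'
        cases a with
        | zero =>
          refine ⟨0, b + 1, φ w, ?_⟩
          rw [← stab_rel, pow_succ']
          group
        | succ a =>
          refine ⟨a, b, w, ?_⟩
          rw [pow_succ']
          group

lemma torus_rep (X : Fin k → Matrix (Fin 2) (Fin 2) R) (hX : ∀ i, IsUnit (X i).det)
    (σ : R ≃+* R)
    (hσ : ∀ i, (σ : R →+* R).mapMatrix (X i) = ev X (φ (FreeGroup.of i)).toWord) :
    ∃ Ψ : MappingTorus k φ →* RingAut (Matrix (Fin 2) (Fin 2) R),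
      (∀ L z, Ψ (base φ (FreeGroup.mk L)) z * ev X L = ev X L * z) ∧
      ∀ z, Ψ (stab φ) z = (σ : R →+* R).mapMatrix z := by
  have hU : ∀ i, IsUnit (X i) := fun i => (Matrix.isUnit_iff_isUnit_det _).mpr (hX i)
  choose U hU using hU
  let f : FreeGroup (Fin k) →* RingAut (Matrix (Fin 2) (Fin 2) R) :=
    FreeGroup.lift fun i => conjAut (U i)
  have hf : ∀ L z, f (FreeGroup.mk L) z * ev X L = ev X L * z := by
    intro L
    induction L with
    | nil => intro z; rw [← FreeGroup.one_eq_mk]; simp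
    | cons l L ih =>
      intro z
      have hl : ∀ y, f (if l.2 then FreeGroup.of l.1 else (FreeGroup.of l.1)⁻¹) y * evL X l
          = evL X l * y := by
        intro y
        unfold evL
        split_ifs
        · simp only [f, FreeGroup.lift_apply_of, ← hU]
          exact conjAut_mul _ _
        · simp only [f, FreeGroup.lift_apply_of, map_inv]
          set y' := (conjAut (U l.1))⁻¹ y with hy'
          have h1 : X l.1 * y' = y * X l.1 := by
            rw [← hU]; exact conjAut_inv_mul _ _
          have h2 : X l.1 * (y' * (X l.1).adjugate) = X l.1 * ((X l.1).adjugate * y) := by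
            rw [← mul_assoc, h1, mul_assoc, Matrix.mul_adjugate, ← mul_assoc, Matrix.mul_adjugate]
            simp
          rw [← hU] at h2 ⊢
          exact (U l.1).mul_right_inj.mp h2
      rw [mk_cons, map_mul, ev_cons, RingAut.mul_apply, ← mul_assoc, hl, mul_assoc, ih, mul_assoc]
  obtain ⟨Ψ, h1, h2⟩ := torus_hom φ f (RingEquiv.mapMatrix σ) (by
    intro i
    rw [mul_inv_eq_iff_eq_mul]
    ext1 z
    rw [RingAut.mul_apply, RingAut.mul_apply]
    have hunit : IsUnit (ev X (φ (FreeGroup.of i)).toWord) := by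
      rw [← hσ, ← hU]
      exact (U i).isUnit.map (σ : R →+* R).mapMatrix
    rw [← hunit.mul_left_inj]
    have e1 := hf (φ (FreeGroup.of i)).toWord ((RingEquiv.mapMatrix σ) z)
    rw [FreeGroup.mk_toWord] at e1
    rw [e1, ← hσ]
    have e2 : f (FreeGroup.of i) z * X i = X i * z := by
      simp only [f, FreeGroup.lift_apply_of, ← hU]
      exact conjAut_mul _ _
    have e3 := congrArg (σ : R →+* R).mapMatrix e2
    rw [map_mul, map_mul] at e3
    exact e3)
  refine ⟨Ψ, ?_, ?_⟩
  · intro L z; rw [h1]; exact hf L z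
  · intro z; rw [h2]; rfl

end Torus
end BSapir

namespace BSapir
section Main
open MvPolynomial
variable {k : ℕ} (φ : FreeGroup (Fin k) →* FreeGroup (Fin k))

lemma resid_of {p : ℕ} {G : Type*} [Group G] (h : ∀ g : G, g ≠ 1 → ∃ (Q : Type) (_ : Group Q)
    (_ : Finite Q) (f : G →* Q), (∀ x, ∃ n : ℕ, f x ^ p ^ n = 1) ∧ f g ≠ 1) :
    ResiduallyFiniteP p G := by
  intro g hg
  obtain ⟨Q, i1, i2, f, h1, h2⟩ := h g hg
  refine ⟨f.range, inferInstance, Fintype.ofFinite _, f.rangeRestrict,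
    f.rangeRestrict_surjective, ?_, ?_⟩
  · rintro ⟨_, x, rfl⟩
    obtain ⟨n, hn⟩ := h1 x
    exact ⟨n, Subtype.ext (by simpa using hn)⟩
  · intro h3
    exact h2 (by simpa using congrArg Subtype.val h3)

lemma torus_induction (P : MappingTorus k φ → Prop) (S : Subgroup (MappingTorus k φ))
    (hS : ∀ i, base φ (FreeGroup.of i) ∈ S) (ht : stab φ ∈ S) : S = ⊤ := by
  rw [eq_top_iff]
  intro g _
  have hb : ∀ w, base φ w ∈ S := by
    intro w
    induction w using FreeGroup.induction_on with
    | C1 => rw [map_one]; exact S.one_mem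
    | of i => exact hS i
    | inv_of i h => rw [map_inv]; exact S.inv_mem h
    | mul x y hx hy => rw [map_mul]; exact S.mul_mem hx hy
  obtain ⟨a, b, w, rfl⟩ := normal_form φ g
  exact S.mul_mem (S.mul_mem (S.pow_mem (S.inv_mem ht) _) (hb w)) (S.pow_mem ht _)

lemma intertwine {A A' : Type} [Ring A] [Ring A'] (Ψ : MappingTorus k φ →* RingAut A)
    (Ψ' : MappingTorus k φ →* RingAut A') (π : A →+* A')
    (h1 : ∀ i z, π (Ψ (base φ (FreeGroup.of i)) z) = Ψ' (base φ (FreeGroup.of i)) (π z))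
    (h2 : ∀ z, π (Ψ (stab φ) z) = Ψ' (stab φ) (π z)) (g : MappingTorus k φ) :
    ∀ z, π (Ψ g z) = Ψ' g (π z) := by
  let S : Subgroup (MappingTorus k φ) :=
    { carrier := {g | ∀ z, π (Ψ g z) = Ψ' g (π z)}
      one_mem' := by intro z; simp
      mul_mem' := by
        intro a b ha hb z
        simp only [Set.mem_ofPred_eq] at ha hb
        rw [map_mul, map_mul, RingAut.mul_apply, RingAut.mul_apply, ha, hb]
      inv_mem' := by
        intro a ha z
        simp only [Set.mem_ofPred_eq] at ha
        apply (Ψ' a).injective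
        rw [← ha, ← RingAut.mul_apply, ← RingAut.mul_apply, ← map_mul, ← map_mul]
        simp }
  have : S = ⊤ := torus_induction φ (fun _ => True) S h1 h2
  have hg : g ∈ S := this ▸ Subgroup.mem_top g
  exact hg

theorem main_of_ring {p : ℕ} [Fact p.Prime] {B : Type} [CommRing B] [IsDomain B]
    [IsNoetherianRing B] [Algebra (ZMod p) B] (σ : B →ₐ[ZMod p] B)
    (X : Fin k → Matrix (Fin 2) (Fin 2) B) (m : Ideal B) [m.IsMaximal] [Finite (B ⧸ m)]
    (hσX : ∀ i, (σ : B →+* B).mapMatrix (X i) = ev X (φ (FreeGroup.of i)).toWord)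
    (hdet : ∀ i, (X i).det ∉ m)
    (hσm : ∀ b ∈ m, σ b ∈ m)
    (hsurj : ∀ j b, ∃ c, b - σ c ∈ m ^ j)
    (hfaith : ∀ L, (∀ z, z * ev X L = ev X L * z) → FreeGroup.mk L = 1) :
    ∃ H : Subgroup (MappingTorus k φ), H.FiniteIndex ∧ ResiduallyFiniteP p ↥H := by
  have hfin : ∀ j, Finite (B ⧸ m ^ j) := fun j =>
    Ideal.finite_quotient_pow (IsNoetherian.noetherian m) j
  have hle : ∀ j, m ^ j ≤ (m ^ j).comap (σ : B →+* B) := by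
    intro j
    rw [← Ideal.map_le_iff_le_comap, Ideal.map_pow]
    refine Ideal.pow_right_mono ?_ j
    rw [Ideal.map_le_iff_le_comap]
    exact hσm
  let σq : ∀ j, B ⧸ m ^ j →+* B ⧸ m ^ j := fun j => Ideal.quotientMap (m ^ j) (σ : B →+* B) (hle j)
  have hσq : ∀ j b, σq j (Ideal.Quotient.mk _ b) = Ideal.Quotient.mk _ (σ b) := fun j b => by
    simp [σq]
  have hbij : ∀ j, Function.Bijective (σq j) := by
    intro j
    have hs : Function.Surjective (σq j) := by
      intro y
      obtain ⟨b, rfl⟩ := Ideal.Quotient.mk_surjective y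
      obtain ⟨c, hc⟩ := hsurj j b
      exact ⟨Ideal.Quotient.mk _ c, by rw [hσq]; exact (Ideal.Quotient.eq.mpr hc).symm⟩
    exact ⟨Finite.injective_iff_surjective.mpr hs, hs⟩
  let σe : ∀ j, B ⧸ m ^ j ≃+* B ⧸ m ^ j := fun j => RingEquiv.ofBijective (σq j) (hbij j)
  have hσe : ∀ j b, σe j (Ideal.Quotient.mk _ b) = Ideal.Quotient.mk _ (σ b) := hσq
  let π : ∀ j, Matrix (Fin 2) (Fin 2) B →+* Matrix (Fin 2) (Fin 2) (B ⧸ m ^ j) :=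
    fun j => (Ideal.Quotient.mk (m ^ j)).mapMatrix
  have hπs : ∀ j, Function.Surjective (π j) := by
    intro j z
    choose y hy using fun a b => Ideal.Quotient.mk_surjective (z a b)
    exact ⟨Matrix.of y, by ext a b; simp [π, hy]⟩
  have hσπ : ∀ j z, ((σe j : B ⧸ m ^ j →+* B ⧸ m ^ j)).mapMatrix (π j z) =
      π j ((σ : B →+* B).mapMatrix z) := by
    intro j z
    ext a b
    simp [π, hσe]
  have hunit : ∀ j i, IsUnit (π j (X i)).det := by
    intro j i
    have e : (π j (X i)).det = Ideal.Quotient.mk (m ^ j) (X i).det :=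
      (RingHom.map_det _ _).symm
    rw [e]
    obtain ⟨u, v, hv, huv⟩ := Ideal.IsMaximal.exists_inv (inferInstance : m.IsMaximal) (hdet i)
    have h1 : IsNilpotent (Ideal.Quotient.mk (m ^ j) v) :=
      ⟨j, by rw [← map_pow]; exact Ideal.Quotient.eq_zero_iff_mem.mpr (Ideal.pow_mem_pow hv j)⟩
    have h2 : Ideal.Quotient.mk (m ^ j) u * Ideal.Quotient.mk (m ^ j) (X i).det =
        1 - Ideal.Quotient.mk (m ^ j) v := by
      rw [← map_mul, ← map_one (Ideal.Quotient.mk (m ^ j)), ← map_sub, ← huv, add_sub_cancel_right]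
    have h3 := h1.isUnit_one_sub
    rw [← h2] at h3
    exact isUnit_of_mul_isUnit_right h3
  have hrep : ∀ j, ∃ Ψ : MappingTorus k φ →* RingAut (Matrix (Fin 2) (Fin 2) (B ⧸ m ^ j)),
      (∀ L z, Ψ (base φ (FreeGroup.mk L)) z * ev (fun i => π j (X i)) L =
        ev (fun i => π j (X i)) L * z) ∧
      ∀ z, Ψ (stab φ) z = (σe j : B ⧸ m ^ j →+* B ⧸ m ^ j).mapMatrix z := by
    intro j
    refine torus_rep φ (fun i => π j (X i)) (hunit j) (σe j) ?_
    intro i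
    rw [hσπ, hσX]
    exact map_ev X _ _
  choose Ψ hΨ1 hΨ2 using hrep
  have hfinA : ∀ j, Finite (RingAut (Matrix (Fin 2) (Fin 2) (B ⧸ m ^ j))) := by
    intro j
    have := hfin j
    exact Finite.of_injective (fun (α : RingAut (Matrix (Fin 2) (Fin 2) (B ⧸ m ^ j))) z => α z)
      (fun α β h => RingEquiv.ext fun z => congrFun h z)
  -- compatibility of the representations
  have hcomp : ∀ j, 2 ≤ j → ∀ g ∈ (Ψ 2).ker, ∀ z a b,
      (Ψ j g z - z) a b ∈ (m.map (Ideal.Quotient.mk (m ^ j))) ^ 2 := by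
    intro j hj g hg z a b
    let τ : B ⧸ m ^ j →+* B ⧸ m ^ 2 := Ideal.Quotient.factor (Ideal.pow_le_pow_right hj)
    have hτ : ∀ z, τ.mapMatrix (π j z) = π 2 z := by
      intro z; ext a b; simp [π, τ]
    have hi := intertwine φ (Ψ j) (Ψ 2) τ.mapMatrix (by
      intro i z
      have e1 := hΨ1 j [(i, true)] z
      have e2 := hΨ1 2 [(i, true)] (τ.mapMatrix z)
      simp only [ev_cons, ev_nil, mul_one, evL, if_true] at e1 e2
      have e3 := congrArg τ.mapMatrix e1
      rw [map_mul, map_mul, hτ] at e3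
      have hu : IsUnit (π 2 (X i)) := (Matrix.isUnit_iff_isUnit_det _).mpr (hunit 2 i)
      rw [← hu.mul_left_inj]
      exact e3.trans e2.symm) (by
      intro z
      obtain ⟨y, rfl⟩ := hπs j z
      rw [hΨ2, hΨ2, hτ, hσπ, hσπ, hτ]) g z
    rw [MonoidHom.mem_ker.mp hg, RingAut.one_apply] at hi
    have h0 : τ ((Ψ j g z - z) a b) = 0 := by
      have := congrArg (fun M => M a b) hi
      simp only [RingHom.mapMatrix_apply, Matrix.map_apply] at this
      rw [Matrix.sub_apply, map_sub, this, sub_self]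
    obtain ⟨c, hc⟩ := Ideal.Quotient.mk_surjective ((Ψ j g z - z) a b)
    rw [← hc] at h0 ⊢
    have h1 : c ∈ m ^ 2 := by
      rw [Ideal.Quotient.factor_mk] at h0
      exact Ideal.Quotient.eq_zero_iff_mem.mp h0
    rw [← Ideal.map_pow]
    exact Ideal.mem_map_of_mem _ h1
  refine ⟨(Ψ 2).ker, ?_, ?_⟩
  · have := hfinA 2
    infer_instance
  · refine resid_of ?_
    rintro ⟨g, hg⟩ hne
    have hne' : g ≠ 1 := fun h => hne (Subtype.ext h)
    -- the degree homomorphism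
    obtain ⟨deg, hdeg1, hdeg2⟩ := torus_hom φ (1 : FreeGroup (Fin k) →* Multiplicative ℤ)
      (Multiplicative.ofAdd 1) (by intro i; simp)
    obtain ⟨a, b, w, hgw⟩ := normal_form φ g
    have hdg : deg g = Multiplicative.ofAdd ((b : ℤ) - a) := by
      rw [hgw]
      simp only [map_mul, map_pow, map_inv, hdeg1, hdeg2, MonoidHom.one_apply, mul_one]
      apply Multiplicative.toAdd.injective
      simp
      ring
    by_cases hab : a = b
    · subst hab
      have hw : w ≠ 1 := by
        rintro rfl
        apply hne'
        rw [hgw]; simp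
      obtain ⟨j, hj, hΨj⟩ : ∃ j, 2 ≤ j ∧ Ψ j g ≠ 1 := by
        by_contra hcon
        push Not at hcon
        have hcon2 : ∀ j, 2 ≤ j → Ψ j (base φ w) = 1 := by
          intro j hj
          have := hcon j hj
          rw [hgw, map_mul, map_mul, map_pow, map_pow, map_inv, inv_pow, mul_assoc,
            inv_mul_eq_one] at this
          exact (right_eq_mul.mp this.symm.symm.symm.symm) |> fun h => by simpa using h
        apply hw
        rw [← FreeGroup.mk_toWord (x := w)]
        apply hfaith
        intro z
        have hmem : ∀ j, 2 ≤ j → ∀ a b, (z * ev X w.toWord - ev X w.toWord * z) a b ∈ m ^ j := by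
          intro j hj a b
          have h1 := hΨ1 j w.toWord (π j z)
          rw [FreeGroup.mk_toWord, hcon2 j hj, RingAut.one_apply] at h1
          have h2 : ev (fun i => π j (X i)) w.toWord = π j (ev X w.toWord) := (map_ev X _ _).symm
          rw [h2, ← map_mul, ← map_mul, ← sub_eq_zero, ← map_sub] at h1
          have h3 := congrArg (fun M => M a b) h1
          exact Ideal.Quotient.eq_zero_iff_mem.mp h3
        rw [← sub_eq_zero]
        ext a b
        have hbot := Ideal.iInf_pow_eq_bot_of_isDomain m (Ideal.IsMaximal.ne_top inferInstance)
        have : (z * ev X w.toWord - ev X w.toWord * z) a b ∈ ⨅ i, m ^ i := by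
          rw [Ideal.mem_iInf]
          intro i
          exact Ideal.pow_le_pow_right (Nat.le_add_right i 2) (hmem (i + 2) (by omega) a b)
        rw [hbot] at this
        simpa using this
      have := hfinA j
      refine ⟨RingAut (Matrix (Fin 2) (Fin 2) (B ⧸ m ^ j)), inferInstance, inferInstance,
        (Ψ j).comp (Ψ 2).ker.subtype, ?_, hΨj⟩
      rintro ⟨x, hx⟩
      have hnt : Nontrivial (B ⧸ m ^ j) := by
        refine Ideal.Quotient.nontrivial_iff.mpr fun h => ?_
        have h1 : m ^ j ≤ m := Ideal.pow_le_self (by omega)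
        rw [h, top_le_iff] at h1
        exact Ideal.IsMaximal.ne_top inferInstance h1
      exact aut_p_power (p := p) (m.map (Ideal.Quotient.mk (m ^ j))) j
        (by rw [← Ideal.map_pow, Ideal.map_quotient_self]) (Ψ j x) (hcomp j hj x hx)
    · have hp : 1 < p := (Fact.out : p.Prime).one_lt
      obtain ⟨e, he⟩ : ∃ e, ((b : ℤ) - a).natAbs < p ^ e := ⟨_, Nat.lt_pow_self hp⟩
      have : NeZero (p ^ e) := ⟨by positivity⟩
      have hmul : ∀ x : Multiplicative (ZMod (p ^ e)), x ^ p ^ e = 1 := by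
        intro x
        apply Multiplicative.toAdd.injective
        simp
      refine ⟨Multiplicative (ZMod (p ^ e)), inferInstance, inferInstance,
        ((AddMonoidHom.toMultiplicative (Int.castAddHom (ZMod (p ^ e)))).comp deg).comp
          (Ψ 2).ker.subtype, fun x => ⟨e, hmul _⟩, ?_⟩
      intro h0
      have h1 : (((b : ℤ) - a : ℤ) : ZMod (p ^ e)) = 0 := by
        have h2 : AddMonoidHom.toMultiplicative (Int.castAddHom (ZMod (p ^ e))) (deg g) = 1 := h0
        rw [hdg] at h2
        exact h2
      rw [ZMod.intCast_zmod_eq_zero_iff_dvd] at h1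
      have h3 := Int.eq_zero_of_dvd_of_natAbs_lt_natAbs h1 (by simpa using he)
      omega

end Main
end BSapir

namespace BSapir
section CharZero
open MvPolynomial

lemma aeval_finSucc {r : ℕ} {S : Type} [CommRing S] (y : S) (v : Fin r → S)
    (h : MvPolynomial (Fin (r + 1)) ℤ) :
    aeval (Fin.cons y v : Fin (r + 1) → S) h =
      ((finSuccEquiv ℤ r h).map (aeval v : MvPolynomial (Fin r) ℤ →ₐ[ℤ] S).toRingHom).eval y := by
  have : (aeval (Fin.cons y v : Fin (r + 1) → S) : MvPolynomial (Fin (r+1)) ℤ →ₐ[ℤ] S).toRingHom =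
      (Polynomial.eval₂RingHom (aeval v : MvPolynomial (Fin r) ℤ →ₐ[ℤ] S).toRingHom y).comp
        (finSuccEquiv ℤ r).toRingEquiv.toRingHom := by
    refine MvPolynomial.ringHom_ext (fun _ => by simp) ?_
    intro i
    refine Fin.cases ?_ (fun i => ?_) i
    · simp [finSuccEquiv_X_zero]
    · simp [finSuccEquiv_X_succ]
  have h2 := DFunLike.congr_fun this h
  rw [Polynomial.eval_map]
  exact h2

lemma pow_app {R S : Type} [CommRing R] [CommRing S] [Algebra R S] (σ : S →ₐ[R] S) (a b : ℕ) (x : S) :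
    (σ ^ a) ((σ ^ b) x) = (σ ^ (a + b)) x := by
  rw [pow_add, AlgHom.mul_apply]

lemma map_pow_eval {R S : Type} [CommRing R] [CommRing S] [Algebra R S] (σ : S →ₐ[R] S) (n : ℕ) (x : S)
    (H : Polynomial S) : (σ ^ n) ((H.map (σ : S →+* S)).eval x) =
      (H.map ((σ ^ (n + 1) : S →ₐ[R] S) : S →+* S)).eval ((σ ^ n) x) := by
  have : ((σ ^ (n + 1) : S →ₐ[R] S) : S →+* S) = ((σ ^ n : S →ₐ[R] S) : S →+* S).comp (σ : S →+* S) := by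
    ext s
    simp [pow_succ, AlgHom.mul_apply]
  rw [this, ← Polynomial.map_map]
  exact (Polynomial.eval_map_apply ((σ ^ n : S →ₐ[R] S) : S →+* S) x).symm

theorem sep_rel {ι : Type} [Fintype ι] (σ : MvPolynomial ι ℤ →ₐ[ℤ] MvPolynomial ι ℤ) (n : ℕ)
    (hn : ∀ g, (σ ^ (n + 1)) g = 0 → (σ ^ n) g = 0) (x : MvPolynomial ι ℤ) :
    ∃ H : Polynomial (MvPolynomial ι ℤ),
      (σ ^ n) ((H.map (σ : MvPolynomial ι ℤ →+* MvPolynomial ι ℤ)).eval x) = 0 ∧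
      (σ ^ n) ((H.map (σ : MvPolynomial ι ℤ →+* MvPolynomial ι ℤ)).derivative.eval x) ≠ 0 := by
  classical
  set τ : MvPolynomial ι ℤ →+* MvPolynomial ι ℤ :=
    ((σ ^ (n + 1) : MvPolynomial ι ℤ →ₐ[ℤ] MvPolynomial ι ℤ) : MvPolynomial ι ℤ →+* MvPolynomial ι ℤ)
    with hτ
  -- existence of some algebraic relation
  have hex : ∃ H : Polynomial (MvPolynomial ι ℤ), H.map τ ≠ 0 ∧ (H.map τ).eval ((σ ^ n) x) = 0 := by
    have h0 : ∃ r : ℕ, ¬ AlgebraicIndependent ℤ (fun j : Fin r => (σ ^ (n + j.1)) x) :=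
      ⟨_, not_algInd (Fintype.card ι) le_rfl _⟩
    obtain ⟨r, hr⟩ : ∃ r, r = Nat.find h0 := ⟨_, rfl⟩
    have hr1 := Nat.find_spec h0
    rw [← hr] at hr1
    cases r with
    | zero =>
      exfalso
      apply hr1
      rw [algebraicIndependent_empty_type_iff]
      exact FaithfulSMul.algebraMap_injective ℤ (MvPolynomial ι ℤ)
    | succ r =>
      have hmin : AlgebraicIndependent ℤ (fun j : Fin r => (σ ^ (n + j.1)) x) := by
        by_contra hcon
        have := Nat.find_min' h0 hcon
        omega
      set v : Fin r → MvPolynomial ι ℤ := fun j => (σ ^ (n + 1 + j.1)) x with hv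
      have hw : ∀ (a : ℕ) (h : MvPolynomial (Fin r) ℤ),
          (σ ^ a) (aeval (fun j : Fin r => (σ ^ j.1) x) h) =
            aeval (fun j : Fin r => (σ ^ (a + j.1)) x) h := by
        intro a h
        rw [← AlgHom.comp_apply, comp_aeval]
        simp only [pow_app]
      have hvind : AlgebraicIndependent ℤ v := by
        rw [algebraicIndependent_iff]
        intro h hh
        rw [hv, ← hw] at hh
        have h2 := hn _ hh
        rw [hw] at h2
        exact (algebraicIndependent_iff.mp hmin) h h2
      rw [algebraicIndependent_iff] at hr1
      push Not at hr1
      obtain ⟨h, hh, hh0⟩ := hr1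
      have hcons : (fun j : Fin (r + 1) => (σ ^ (n + j.1)) x) =
          (Fin.cons ((σ ^ n) x) v : Fin (r + 1) → MvPolynomial ι ℤ) := by
        funext j
        refine Fin.cases ?_ (fun j => ?_) j
        · simp
        · rw [Fin.cons_succ, hv, Fin.val_succ]
          have : n + (j.1 + 1) = n + 1 + j.1 := by omega
          simp only [this]
      rw [hcons] at hh
      replace hh := (aeval_finSucc _ v h).symm.trans hh
      refine ⟨(finSuccEquiv ℤ r h).map
        (aeval (fun j : Fin r => (σ ^ j.1) x) : MvPolynomial (Fin r) ℤ →ₐ[ℤ] _).toRingHom, ?_, ?_⟩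
      all_goals
        rw [Polynomial.map_map]
        have hcomp : τ.comp
            (aeval (fun j : Fin r => (σ ^ j.1) x) : MvPolynomial (Fin r) ℤ →ₐ[ℤ] _).toRingHom =
            (aeval v : MvPolynomial (Fin r) ℤ →ₐ[ℤ] _).toRingHom := by
          refine RingHom.ext fun h => ?_
          exact hw (n + 1) h
        rw [hcomp]
      · rw [Ne, Polynomial.map_eq_zero_iff hvind]
        simpa using hh0
      · exact hh
  -- minimal degree
  have hex2 : ∃ d : ℕ, ∃ H : Polynomial (MvPolynomial ι ℤ), (H.map τ).natDegree = d ∧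
      H.map τ ≠ 0 ∧ (H.map τ).eval ((σ ^ n) x) = 0 := by
    obtain ⟨H, h1, h2⟩ := hex
    exact ⟨_, H, rfl, h1, h2⟩
  obtain ⟨H, h1, h2, h3⟩ := Nat.find_spec hex2
  refine ⟨H, by rw [map_pow_eval]; exact h3, ?_⟩
  rw [Polynomial.derivative_map, map_pow_eval]
  intro h0
  have hdeg : (H.map τ).natDegree ≠ 0 := by
    intro hd
    rw [Polynomial.natDegree_eq_zero] at hd
    obtain ⟨c, hc⟩ := hd
    rw [← hc, Polynomial.eval_C] at h3
    rw [← hc, h3] at h2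
    simp at h2
  have hne : (H.derivative).map τ ≠ 0 := by
    rw [← Polynomial.derivative_map]
    intro hd
    exact hdeg (Polynomial.derivative_eq_zero.mp hd)
  have hlt : ((H.derivative).map τ).natDegree < Nat.find hex2 := by
    rw [← h1, ← Polynomial.derivative_map]
    exact Polynomial.natDegree_derivative_lt hdeg
  exact Nat.find_min hex2 hlt ⟨_, rfl, hne, h0⟩

lemma reduce_ne_zero {ι : Type} (g : MvPolynomial ι ℤ) (hg : g ≠ 0) :
    ∃ N : ℕ, ∀ p : ℕ, N < p → MvPolynomial.map (Int.castRingHom (ZMod p)) g ≠ 0 := by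
  obtain ⟨d, hd⟩ := MvPolynomial.ne_zero_iff.mp hg
  refine ⟨(coeff d g).natAbs, fun p hp h0 => ?_⟩
  have h1 := congrArg (coeff d) h0
  rw [coeff_map, coeff_zero, eq_intCast, ZMod.intCast_zmod_eq_zero_iff_dvd] at h1
  exact hd (Int.eq_zero_of_dvd_of_natAbs_lt_natAbs h1 (by simpa using hp))

end CharZero
end BSapir

namespace BSapir
section Faith
open Polynomial
variable {k : ℕ} {F : Type} [Field F]

/-- The specialised generators `T N_l - N_{l⁻¹}`. -/
noncomputable def Y (c : Fin k × Bool → F) (i : Fin k) : Matrix (Fin 2) (Fin 2) F[X] :=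
  !![-X * C (c (i, false)) + C (c (i, true)), X - 1;
     -X * C (c (i, true) * c (i, false)) + C (c (i, true) * c (i, false)),
       X * C (c (i, true)) - C (c (i, false))]

lemma det_Y (c : Fin k × Bool → F) (i : Fin k) :
    (Y c i).det = X * C ((c (i, true) - c (i, false)) ^ 2) := by
  rw [Y, Matrix.det_fin_two_of]
  simp only [C_mul, C_sub, C_pow]
  ring

lemma det_Y_ne (c : Fin k × Bool → F) (hc : Function.Injective c) (i : Fin k) :
    (Y c i).det ≠ 0 := by
  rw [det_Y]
  refine mul_ne_zero X_ne_zero (C_ne_zero.mpr (pow_ne_zero _ (sub_ne_zero.mpr fun h => ?_)))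
  simpa using hc h

lemma evL_Y (c : Fin k × Bool → F) (l : Fin k × Bool) :
    ∃ (e : F) (w : Fin 2 → Fin 2 → F), e ≠ 0 ∧ ∀ a b, evL (Y c) l a b =
      X * C (e * (![1, c l] a * ![-c (l.1, !l.2), 1] b)) + C (w a b) := by
  obtain ⟨i, b⟩ := l
  cases b
  · refine ⟨-1, fun a b => !![-c (i, false), 1; -(c (i, true) * c (i, false)), c (i, true)] a b, by simp, ?_⟩
    simp only [evL, Y, Matrix.adjugate_fin_two]
    intro a b
    fin_cases a <;> fin_cases b <;> simp <;> ring
  · refine ⟨1, fun a b => !![c (i, true), -1; (c (i, true) * c (i, false)), -c (i, false)] a b, by simp, ?_⟩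
    simp only [evL, Y]
    intro a b
    fin_cases a <;> fin_cases b <;> simp <;> ring

lemma lead (c : Fin k × Bool → F) (hc : Function.Injective c) (L : List (Fin k × Bool)) :
    ∀ l, FreeGroup.IsReduced (l :: L) → ∃ r : Fin 2 → F, (∃ b, r b ≠ 0) ∧
      ∀ a b, (ev (Y c) (l :: L) a b).natDegree ≤ L.length + 1 ∧
        (ev (Y c) (l :: L) a b).coeff (L.length + 1) = ![1, c l] a * r b := by
  induction L with
  | nil =>
    intro l _
    obtain ⟨e, w, he, h⟩ := evL_Y c l
    refine ⟨fun b => e * ![-c (l.1, !l.2), 1] b, ⟨1, by simpa using he⟩, fun a b => ?_⟩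
    rw [ev_cons, ev_nil, mul_one, h]
    constructor
    · simp only [List.length_nil, zero_add]
      compute_degree
    · simp [coeff_C, -map_mul]
      ring
  | cons l' L ih =>
    intro l hl
    rw [FreeGroup.isReduced_cons_cons] at hl
    obtain ⟨r, ⟨b0, hr⟩, hM⟩ := ih l' hl.2
    obtain ⟨e, w, he, h⟩ := evL_Y c l
    have hne : c l' - c (l.1, !l.2) ≠ 0 := by
      refine sub_ne_zero.mpr fun h => ?_
      have h2 := hc h
      have := hl.1 (by rw [h2])
      rw [h2] at this
      simp at this
    refine ⟨fun b => e * (c l' - c (l.1, !l.2)) * r b, ⟨b0, mul_ne_zero (mul_ne_zero he hne) hr⟩,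
      fun a b => ?_⟩
    rw [ev_cons, Matrix.mul_apply, Fin.sum_univ_two, h, h]
    generalize ev (Y c) (l' :: L) = M at hM
    have hd : ∀ d, (M d b).coeff (L.length + 1 + 1) = 0 := fun d =>
      coeff_eq_zero_of_natDegree_lt (by have := (hM d b).1; omega)
    have hdeg : ∀ (d : Fin 2) (x y : F),
        ((X * C x + C y) * M d b).natDegree ≤ L.length + 1 + 1 := by
      intro d x y
      refine natDegree_mul_le.trans ?_
      have h1 : (X * C x + C y).natDegree ≤ 1 := by compute_degree
      have := (hM d b).1
      omega
    have hco : ∀ (d : Fin 2) (x y : F),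
        ((X * C x + C y) * M d b).coeff (L.length + 1 + 1) = x * (![1, c l'] d * r b) := by
      intro d x y
      rw [add_mul, mul_assoc, coeff_add, coeff_X_mul, coeff_C_mul, coeff_C_mul, hd, (hM d b).2]
      ring
    refine ⟨natDegree_add_le_of_degree_le (hdeg _ _ _) (hdeg _ _ _), ?_⟩
    rw [List.length_cons, coeff_add, hco, hco]
    simp
    ring

theorem faith {S : Type} [CommRing S] [Algebra F S] (θ : S →ₐ[F] F[X])
    (Z : Fin k → Matrix (Fin 2) (Fin 2) S)
    (c : Fin k × Bool → F) (hc : Function.Injective c)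
    (hZ : ∀ i, (θ : S →+* F[X]).mapMatrix (Z i) = Y c i)
    (L : List (Fin k × Bool))
    (hL : ∀ z : Matrix (Fin 2) (Fin 2) F, (algebraMap F S).mapMatrix z * ev Z L =
      ev Z L * (algebraMap F S).mapMatrix z) : FreeGroup.mk L = 1 := by
  have h1 : ∀ z : Matrix (Fin 2) (Fin 2) F, (C : F →+* F[X]).mapMatrix z * ev (Y c) L =
      ev (Y c) L * (C : F →+* F[X]).mapMatrix z := by
    intro z
    have h2 := congrArg (θ : S →+* F[X]).mapMatrix (hL z)
    have h3 : (θ : S →+* F[X]).mapMatrix ((algebraMap F S).mapMatrix z) =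
        (C : F →+* F[X]).mapMatrix z := by
      ext1 a b
      simp
    rw [map_mul, map_mul, map_ev, h3] at h2
    simpa only [hZ] using h2
  obtain ⟨d, hd, he⟩ := ev_red (Y c) (nonZeroDivisors F[X])
    (fun i => mem_nonZeroDivisors_of_ne_zero (det_Y_ne c hc i)) L _ FreeGroup.reduce.red
  rw [he] at h1
  have h2 : ∀ z : Matrix (Fin 2) (Fin 2) F, (C : F →+* F[X]).mapMatrix z *
      ev (Y c) (FreeGroup.reduce L) =
      ev (Y c) (FreeGroup.reduce L) * (C : F →+* F[X]).mapMatrix z := by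
    intro z
    have h3 := h1 z
    rw [mul_smul_comm, smul_mul_assoc] at h3
    ext1 a b
    have h4 := congrFun (congrFun h3 a) b
    simp only [Matrix.smul_apply, smul_eq_mul] at h4
    exact mul_left_cancel₀ (nonZeroDivisors.ne_zero hd) h4
  have hmk : FreeGroup.mk L = FreeGroup.mk (FreeGroup.reduce L) := FreeGroup.reduce.self.symm
  have hred : FreeGroup.IsReduced (FreeGroup.reduce L) :=
    FreeGroup.isReduced_iff_reduce_eq.mpr FreeGroup.reduce.idem
  rw [hmk]
  generalize FreeGroup.reduce L = L' at *
  cases L' with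
  | nil => rfl
  | cons l L' =>
    exfalso
    obtain ⟨r, ⟨b, hb⟩, h3⟩ := lead c hc L' l hred
    generalize ev (Y c) (l :: L') = M at *
    have e1 := h2 !![0, 1; 0, 0]
    have e2 := h2 !![0, 0; 1, 0]
    have m00 := (h3 0 0).2
    have m01 := (h3 0 1).2
    have m11 := (h3 1 1).2
    have a1 := congrFun (congrFun e1 0) 1
    have a2 := congrFun (congrFun e2 1) 1
    have a3 := congrFun (congrFun e1 0) 0
    simp [Matrix.mul_apply, Fin.sum_univ_two] at a1 a2 a3
    have r1 : r 1 = 0 := by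
      rw [a2] at m01
      simpa using m01.symm
    have r0 : r 0 = 0 := by
      rw [a1, m00, r1] at m11
      simpa using m11
    fin_cases b
    · exact hb r0
    · exact hb r1
end Faith
end BSapir

namespace BSapir
section Assembly
open MvPolynomial
variable {k : ℕ} (R : Type) [CommRing R] (φ : FreeGroup (Fin k) →* FreeGroup (Fin k))

/-- The generic matrices. -/
noncomputable def Xg (i : Fin k) :
    Matrix (Fin 2) (Fin 2) (MvPolynomial (Fin k × Fin 2 × Fin 2) R) :=
  Matrix.of fun a b => X (i, a, b)

/-- The substitution endomorphism attached to `φ`. -/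
noncomputable def sg : MvPolynomial (Fin k × Fin 2 × Fin 2) R →ₐ[R]
    MvPolynomial (Fin k × Fin 2 × Fin 2) R :=
  aeval fun x => ev (Xg R) (φ (FreeGroup.of x.1)).toWord x.2.1 x.2.2

lemma sg_Xg (i : Fin k) : (sg R φ : _ →+* _).mapMatrix (Xg R i) =
    ev (Xg R) (φ (FreeGroup.of i)).toWord := by
  ext1 a b
  simp [sg, Xg]

lemma sg_map {R' : Type} [CommRing R'] (f : R →+* R')
    (g : MvPolynomial (Fin k × Fin 2 × Fin 2) R) :
    MvPolynomial.map f (sg R φ g) = sg R' φ (MvPolynomial.map f g) := by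
  have : (MvPolynomial.map f).comp (sg R φ : MvPolynomial (Fin k × Fin 2 × Fin 2) R →+*
        MvPolynomial (Fin k × Fin 2 × Fin 2) R) =
      (sg R' φ : MvPolynomial (Fin k × Fin 2 × Fin 2) R' →+*
        MvPolynomial (Fin k × Fin 2 × Fin 2) R').comp (MvPolynomial.map f) := by
    refine MvPolynomial.ringHom_ext (fun r => ?_) fun x => ?_
    · simp [sg]
    · obtain ⟨i, a, b⟩ := x
      have h := congrFun (congrFun (map_ev (Xg R) (MvPolynomial.map f)
        (φ (FreeGroup.of i)).toWord) a) b
      have h2 : (fun i => (MvPolynomial.map f).mapMatrix (Xg R i)) = Xg (k := k) R' := by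
        funext i
        ext1 a b
        simp [Xg]
      rw [h2] at h
      simpa [sg] using h
  exact DFunLike.congr_fun this g

lemma sg_pow_map {R' : Type} [CommRing R'] (f : R →+* R') (n : ℕ)
    (g : MvPolynomial (Fin k × Fin 2 × Fin 2) R) :
    MvPolynomial.map f ((sg R φ ^ n) g) = (sg R' φ ^ n) (MvPolynomial.map f g) := by
  induction n with
  | zero => simp
  | succ n ih =>
    rw [pow_succ', pow_succ', AlgHom.mul_apply, AlgHom.mul_apply, sg_map, ih]

lemma sg_pow_ev (n : ℕ) (L : List (Fin k × Bool)) :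
    ((sg R φ ^ n : _ →ₐ[R] _) : _ →+* _).mapMatrix (ev (Xg R) L) =
      ev (Xg R) ((subst fun i => (φ (FreeGroup.of i)).toWord)^[n] L) := by
  induction n generalizing L with
  | zero => ext1 a b; simp
  | succ n ih =>
    have : ((sg R φ ^ (n + 1) : _ →ₐ[R] _) : _ →+* _).mapMatrix (ev (Xg R) L) =
        ((sg R φ ^ n : _ →ₐ[R] _) : MvPolynomial (Fin k × Fin 2 × Fin 2) R →+*
            MvPolynomial (Fin k × Fin 2 × Fin 2) R).mapMatrix
          ((sg R φ : MvPolynomial (Fin k × Fin 2 × Fin 2) R →+*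
            MvPolynomial (Fin k × Fin 2 × Fin 2) R).mapMatrix (ev (Xg R) L)) := by
      ext1 a b
      simp [pow_succ, AlgHom.mul_apply]
    rw [this, map_ev]
    simp only [sg_Xg]
    rw [ev_subst, ih, Function.iterate_succ_apply]

lemma mk_subst_iter (n : ℕ) (L : List (Fin k × Bool)) :
    FreeGroup.mk ((subst fun i => (φ (FreeGroup.of i)).toWord)^[n] L) = φ^[n] (FreeGroup.mk L) := by
  induction n generalizing L with
  | zero => rfl
  | succ n ih =>
    rw [Function.iterate_succ_apply, Function.iterate_succ_apply, ih,
      mk_subst φ _ (fun i => FreeGroup.mk_toWord)]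

lemma ker_stab {ι : Type} [Finite ι] (σ : MvPolynomial ι ℤ →ₐ[ℤ] MvPolynomial ι ℤ) :
    ∃ n0, ∀ n, n0 ≤ n → ∀ g, (σ ^ (n + 1)) g = 0 → (σ ^ n) g = 0 := by
  let f : ℕ →o Submodule (MvPolynomial ι ℤ) (MvPolynomial ι ℤ) :=
    { toFun n := (RingHom.ker (σ ^ n) : Ideal (MvPolynomial ι ℤ))
      monotone' := by
        refine monotone_nat_of_le_succ fun n g hg => ?_
        change (σ ^ (n + 1)) g = 0
        change (σ ^ n) g = 0 at hg
        rw [pow_succ', AlgHom.mul_apply, hg, map_zero] }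
  obtain ⟨n0, h⟩ := monotone_stabilizes_iff_noetherian.mpr
    (inferInstance : IsNoetherian (MvPolynomial ι ℤ) (MvPolynomial ι ℤ)) f
  refine ⟨n0, fun n hn g hg => ?_⟩
  have e : f (n + 1) = f n := (h (n + 1) (by omega)).symm.trans (h n hn)
  have h1 : g ∈ f (n + 1) := hg
  rw [e] at h1
  exact h1

theorem final_p (hφ : Function.Injective φ) {p : ℕ} [Fact p.Prime] (hp : 2 * k < p) (n : ℕ)
    (hn : Fintype.card (Fin k × Fin 2 × Fin 2) ≤ n)
    (H : (Fin k × Fin 2 × Fin 2) → Polynomial (MvPolynomial (Fin k × Fin 2 × Fin 2) (ZMod p)))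
    (h1 : ∀ x, (sg (ZMod p) φ ^ n) (((H x).map (sg (ZMod p) φ : _ →+* _)).eval (X x)) = 0)
    (h2 : ∀ x, (sg (ZMod p) φ ^ n) (((H x).map (sg (ZMod p) φ : _ →+* _)).derivative.eval (X x)) ≠ 0) :
    ∃ H : Subgroup (MappingTorus k φ), H.FiniteIndex ∧ ResiduallyFiniteP p ↥H := by
  classical
  -- specialisation
  obtain ⟨c, hc⟩ : ∃ c : Fin k × Bool → ZMod p, Function.Injective c := by
    have : Fintype.card (Fin k × Bool) ≤ Fintype.card (ZMod p) := by
      rw [ZMod.card]; simp; omega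
    obtain ⟨c⟩ := Function.Embedding.nonempty_of_card_le this
    exact ⟨c, c.injective⟩
  let S := MvPolynomial (Fin k × Fin 2 × Fin 2) (ZMod p)
  let σ : S →ₐ[ZMod p] S := sg (ZMod p) φ
  let θ : S →ₐ[ZMod p] Polynomial (ZMod p) := aeval fun x => Y c x.1 x.2.1 x.2.2
  have hθ : ∀ i, (θ : S →+* Polynomial (ZMod p)).mapMatrix (Xg (ZMod p) i) = Y c i := by
    intro i
    ext1 a b
    exact MvPolynomial.aeval_X _ _
  have hfaith0 := faith θ (Xg (ZMod p)) c hc hθ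
  have hfaithn : ∀ L, (∀ z : Matrix (Fin 2) (Fin 2) (ZMod p),
      ((σ ^ n : S →ₐ[ZMod p] S) : S →+* S).mapMatrix
        ((algebraMap (ZMod p) S).mapMatrix z * ev (Xg (ZMod p)) L) =
      ((σ ^ n : S →ₐ[ZMod p] S) : S →+* S).mapMatrix
        (ev (Xg (ZMod p)) L * (algebraMap (ZMod p) S).mapMatrix z)) → FreeGroup.mk L = 1 := by
    intro L hL
    have h3 := hfaith0 ((subst fun i => (φ (FreeGroup.of i)).toWord)^[n] L) fun z => by
      have h4 := hL z
      have h5 : ((σ ^ n : S →ₐ[ZMod p] S) : S →+* S).mapMatrix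
          ((algebraMap (ZMod p) S).mapMatrix z) = (algebraMap (ZMod p) S).mapMatrix z := by
        ext1 a b
        exact AlgHom.commutes (σ ^ n) (z a b)
      rw [map_mul, map_mul, h5, sg_pow_ev] at h4
      exact h4
    rw [mk_subst_iter] at h3
    refine (hφ.iterate n) (h3.trans ?_)
    exact (Function.iterate_fixed (map_one φ) n).symm
  have hdetn : ∀ i, (σ ^ n) (Xg (ZMod p) i).det ≠ 0 := by
    intro i
    have hd : ∀ i, (Xg (ZMod p) i).det ∈ nonZeroDivisors S := by
      intro i
      refine mem_nonZeroDivisors_of_ne_zero fun h0 => det_Y_ne c hc i ?_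
      rw [← hθ i, ← RingHom.map_det, h0, map_zero]
    have h3 : Xg (ZMod p) i = ev (Xg (ZMod p)) [(i, true)] := by simp [evL]
    have h4 : (σ ^ n) (Xg (ZMod p) i).det =
        (((σ ^ n : S →ₐ[ZMod p] S) : S →+* S).mapMatrix (Xg (ZMod p) i)).det :=
      RingHom.map_det ((σ ^ n : S →ₐ[ZMod p] S) : S →+* S) _
    rw [h4, h3, sg_pow_ev]
    exact nonZeroDivisors.ne_zero (det_ev_mem _ _ hd _)
  let D : S := (∏ x, ((H x).map (σ : S →+* S)).derivative.eval (X x)) * ∏ i, (Xg (ZMod p) i).det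
  have hD : (σ ^ n) D ≠ 0 := by
    rw [map_mul, map_prod, map_prod]
    exact mul_ne_zero (Finset.prod_ne_zero_iff.mpr fun x _ => h2 x)
      (Finset.prod_ne_zero_iff.mpr fun i _ => hdetn i)
  obtain ⟨M, e, hM, hDM, hσM⟩ := quasi_fixed σ n hn D hD
  have hDx : ∀ x, ((H x).map (σ : S →+* S)).derivative.eval (X x) ∉ M := fun x hx =>
    hDM (M.mul_mem_right _ (Ideal.mem_of_dvd M (Finset.dvd_prod_of_mem _ (Finset.mem_univ x)) hx))
  have hdx : ∀ i, (Xg (ZMod p) i).det ∉ M := fun i hx =>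
    hDM (M.mul_mem_left _ (Ideal.mem_of_dvd M (Finset.dvd_prod_of_mem _ (Finset.mem_univ i)) hx))
  -- the quotient
  let P : Ideal S := RingHom.ker (σ ^ n)
  have hPp : P.IsPrime := RingHom.ker_isPrime _
  have hP : ∀ g, g ∈ P ↔ (σ ^ n) g = 0 := fun g => Iff.rfl
  have hPσ : P ≤ P.comap σ := by
    intro g hg
    rw [Ideal.mem_comap, hP, ← AlgHom.mul_apply, ← pow_succ, pow_succ', AlgHom.mul_apply,
      (hP g).mp hg, map_zero]
  have hPM : P ≤ M := by
    intro g hg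
    have : ∀ j (g : S), (σ ^ j) g ∈ M → g ∈ M := by
      intro j
      induction j with
      | zero => intro g hg; simpa using hg
      | succ j ih =>
        intro g hg
        rw [pow_succ, AlgHom.mul_apply] at hg
        exact (mem_iff σ M e hσM g).mp (ih _ hg)
    apply this n g
    rw [(hP g).mp hg]
    exact M.zero_mem
  let q : S →ₐ[ZMod p] S ⧸ P := Ideal.Quotient.mkₐ (ZMod p) P
  have hq : Function.Surjective q := Ideal.Quotient.mkₐ_surjective _ _
  let σB : (S ⧸ P) →ₐ[ZMod p] (S ⧸ P) := Ideal.quotientMapₐ P σ hPσ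
  have hσB : ∀ g, σB (q g) = q (σ g) := fun g => rfl
  let m : Ideal (S ⧸ P) := M.map (Ideal.Quotient.mk P)
  have hm : ∀ g, q g ∈ m ↔ g ∈ M := fun g => Ideal.mem_quotient_iff_mem hPM
  have hmax : m.IsMaximal := by
    refine (Ideal.map_eq_top_or_isMaximal_of_surjective (Ideal.Quotient.mk P)
      Ideal.Quotient.mk_surjective hM).resolve_left fun h => ?_
    apply hM.ne_top
    rw [Ideal.eq_top_iff_one, ← hm]
    change _ ∈ M.map (Ideal.Quotient.mk P)
    rw [h]
    trivial
  have hfin : Finite ((S ⧸ P) ⧸ m) := by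
    letI : Field ((S ⧸ P) ⧸ m) := Ideal.Quotient.field m
    haveI : Algebra.FiniteType (ZMod p) S := inferInstance
    haveI : Algebra.FiniteType (ZMod p) (S ⧸ P) := inferInstance
    haveI : Algebra.FiniteType (ZMod p) ((S ⧸ P) ⧸ m) := inferInstance
    haveI : Module.Finite (ZMod p) ((S ⧸ P) ⧸ m) := finite_of_finite_type_of_isJacobsonRing _ _
    exact Module.finite_of_finite (ZMod p)
  have hσm : ∀ b, σB b - b ^ (p ^ e) ∈ m := by
    intro b
    obtain ⟨g, rfl⟩ := hq b
    rw [hσB, ← map_pow, ← map_sub, hm]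
    exact hσM g
  have hcomp : (σB : (S ⧸ P) →+* (S ⧸ P)).comp (q : S →+* S ⧸ P) =
      (q : S →+* S ⧸ P).comp (σ : S →+* S) := rfl
  have hsurj := surj_pow σB m e hσm (Set.range fun x => q (X x)) (by
    rw [Set.range_comp' q X, ← AlgHom.map_adjoin, MvPolynomial.adjoin_range_X, Algebra.map_top]
    exact (AlgHom.range_eq_top q).mpr hq) (by
    rintro _ ⟨x, rfl⟩
    refine ⟨(H x).map (q : S →+* S ⧸ P), ?_, ?_⟩
    · rw [Polynomial.map_map, hcomp, ← Polynomial.map_map]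
      have := Polynomial.eval_map_apply (p := (H x).map (σ : S →+* S)) (q : S →+* S ⧸ P) (X x)
      refine this.trans ?_
      exact Ideal.Quotient.eq_zero_iff_mem.mpr (h1 x)
    · rw [Polynomial.map_map, hcomp, ← Polynomial.map_map, Polynomial.derivative_map]
      have := Polynomial.eval_map_apply (p := ((H x).map (σ : S →+* S)).derivative)
        (q : S →+* S ⧸ P) (X x)
      intro hmem
      have h3 := this ▸ hmem
      exact hDx x ((hm _).mp h3))
  refine main_of_ring φ σB (fun i => (q : S →+* S ⧸ P).mapMatrix (Xg (ZMod p) i)) m ?_ ?_ ?_ hsurj ?_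
  · intro i
    rw [← map_ev, ← sg_Xg]
    ext1 a b
    exact hσB _
  · intro i hi
    rw [← RingHom.map_det] at hi
    exact hdx i ((hm _).mp hi)
  · intro b hb
    exact (mem_iff σB m e hσm b).mpr hb
  · intro L hL
    refine hfaithn L fun z => ?_
    have h3 := hL ((q : S →+* S ⧸ P).mapMatrix ((algebraMap (ZMod p) S).mapMatrix z))
    rw [← map_ev, ← map_mul, ← map_mul] at h3
    ext1 a b
    have h4 := congrFun (congrFun h3 a) b
    have h5 := Ideal.Quotient.eq.mp h4
    have h6 := (hP _).mp h5
    rw [map_sub, sub_eq_zero] at h6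
    exact h6

end Assembly
end BSapir

namespace BSapir
section Final
open MvPolynomial
variable {k : ℕ} (φ : FreeGroup (Fin k) →* FreeGroup (Fin k))

lemma final_rel (n : ℕ)
    (hn : ∀ g, (sg ℤ φ ^ (n + 1)) g = 0 → (sg ℤ φ ^ n) g = 0) (x : Fin k × Fin 2 × Fin 2) :
    ∃ N : ℕ, ∀ p : ℕ, N < p →
      ∃ H : Polynomial (MvPolynomial (Fin k × Fin 2 × Fin 2) (ZMod p)),
      (sg (ZMod p) φ ^ n) ((H.map (sg (ZMod p) φ : _ →+* _)).eval (X x)) = 0 ∧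
      (sg (ZMod p) φ ^ n) ((H.map (sg (ZMod p) φ : _ →+* _)).derivative.eval (X x)) ≠ 0 := by
  obtain ⟨H, h1, h2⟩ := sep_rel (sg ℤ φ) n hn (X x)
  obtain ⟨N, hN⟩ := reduce_ne_zero _ h2
  refine ⟨N, fun p hp => ⟨H.map (MvPolynomial.map (Int.castRingHom (ZMod p))), ?_⟩⟩
  have hcomp : (MvPolynomial.map (Int.castRingHom (ZMod p))).comp
      (sg ℤ φ : MvPolynomial (Fin k × Fin 2 × Fin 2) ℤ →+*
        MvPolynomial (Fin k × Fin 2 × Fin 2) ℤ) =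
      (sg (ZMod p) φ : MvPolynomial (Fin k × Fin 2 × Fin 2) (ZMod p) →+*
        MvPolynomial (Fin k × Fin 2 × Fin 2) (ZMod p)).comp
        (MvPolynomial.map (Int.castRingHom (ZMod p))) :=
    RingHom.ext fun g => sg_map ℤ φ _ g
  rw [Polynomial.map_map, ← hcomp, ← Polynomial.map_map, Polynomial.derivative_map,
      ← MvPolynomial.map_X (Int.castRingHom (ZMod p)), Polynomial.eval_map_apply,
      Polynomial.eval_map_apply, ← sg_pow_map, ← sg_pow_map, h1, map_zero]
  exact ⟨rfl, hN p hp⟩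

end Final
end BSapir

/-- Every mapping torus of an injective endomorphism of a finitely generated free group is
virtually residually (finite `p`) for every sufficiently large prime `p`. -/
theorem mappingTorus_virtually_residually_p (k : ℕ)
    (φ : FreeGroup (Fin k) →* FreeGroup (Fin k)) (hφ : Function.Injective φ) :
    ∃ N : ℕ, ∀ p : ℕ, p.Prime → p > N →
      ∃ H : Subgroup (MappingTorus k φ), H.FiniteIndex ∧ ResiduallyFiniteP p ↥H := by
  obtain ⟨n0, hn0⟩ := BSapir.ker_stab (BSapir.sg ℤ φ)
  obtain ⟨n, hn1, hn2⟩ : ∃ n, n0 ≤ n ∧ Fintype.card (Fin k × Fin 2 × Fin 2) ≤ n :=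
    ⟨max n0 _, le_max_left _ _, le_max_right _ _⟩
  choose N hN using BSapir.final_rel φ n (hn0 n hn1)
  refine ⟨2 * k + ∑ x, N x, fun p hp hpN => ?_⟩
  have : Fact p.Prime := ⟨hp⟩
  have hx : ∀ x, N x < p := fun x => lt_of_le_of_lt
    ((Finset.single_le_sum (fun _ _ => Nat.zero_le _) (Finset.mem_univ x)).trans
      (Nat.le_add_left _ _)) hpN
  choose H h1 h2 using fun x => hN x p (hx x)
  exact BSapir.final_p φ hφ (by omega) n hn2 H h1 h2
end

section
/- Let Φ be an n-variable polynomial self-map of affine n-space with integer coefficients, let V be the Zariski closure over ℤ of the image of Φⁿ (the subscheme defined by the kernel I(V(ℤ)) of (Φ*)ⁿ on ℤ[x₁,…,xₙ]), and let W be a proper closed subscheme of V. Then for every sufficiently large prime p there exist q = p^l, a positive integer a, and a point x ∈ V(𝔽_q) ∖ W(𝔽_q) such that for every X ∈ V(ℤ_q) with π(X) = x and every k ≥ 1, Φ^{a·p^k}(X) ≡ X (mod p^k). In particular, the point X is uniformly recurrent for Φ in the p-adic topology on V(ℤ_q). -/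
open MvPolynomial

noncomputable section

/-- The substitution endomorphism `Φ* : f ↦ f ∘ Φ` of the polynomial ring `R[x₁,…,xₙ]`
induced by an `n`-tuple `Φ` of polynomials. -/
def substEnd (R : Type*) [CommRing R] {n : ℕ} (Φ : Fin n → MvPolynomial (Fin n) R) :
    MvPolynomial (Fin n) R →ₐ[R] MvPolynomial (Fin n) R :=
  MvPolynomial.aeval Φ

/-- The ideal `I(V(R))`: the kernel of the `n`-th power `(Φ*)ⁿ` of the substitution
endomorphism; `V` is the Zariski closure of the image of `Φⁿ`. -/
def iterKer (R : Type*) [CommRing R] {n : ℕ} (Φ : Fin n → MvPolynomial (Fin n) R) :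
    Ideal (MvPolynomial (Fin n) R) :=
  RingHom.ker (substEnd R Φ ^ n)

/-- The polynomial self-map of `Rⁿ` defined by an `n`-tuple of polynomials. -/
def polySelfMap {R : Type*} [CommRing R] {n : ℕ} (Φ : Fin n → MvPolynomial (Fin n) R) :
    (Fin n → R) → (Fin n → R) :=
  fun v i => eval v (Φ i)

/-- `ℤ_q`: the ring of integers of the unramified extension of `ℚ_p` with residue field
`𝔽_q`, `q = p^l`, realized as the ring of Witt vectors of `𝔽_q`. -/
abbrev Zq (p l : ℕ) [Fact p.Prime] : Type _ := WittVector p (GaloisField p l)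

theorem inj_of_surj_trdeg {R A B : Type} [CommRing R] [IsDomain R] [CommRing A] [IsDomain A] [CommRing B] [IsDomain B]
    [Algebra R A] [Algebra R B] [FaithfulSMul R A] [FaithfulSMul R B] (f : A →ₐ[R] B)
    (hf : Function.Surjective f)
    (hfin : Algebra.trdeg R A < Cardinal.aleph0)
    (h : Algebra.trdeg R A ≤ Algebra.trdeg R B) : Function.Injective f := by
  obtain ⟨ι, b, hb⟩ := exists_isTranscendenceBasis' R B
  choose y hy using fun i => hf (b i)
  have hfy : f ∘ y = b := funext hy
  have hyi : AlgebraicIndependent R y := by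
    apply AlgebraicIndependent.of_comp f
    rw [hfy]; exact hb.1
  have hc := hb.cardinalMk_eq_trdeg
  have hyb : IsTranscendenceBasis R y := by
    apply hyi.isTranscendenceBasis_of_trdeg_le hfin
    rw [hc]; exact h
  have halg := hyb.isAlgebraic
  rw [injective_iff_map_eq_zero]
  intro a ha
  by_contra hne
  have h1 := Ideal.comap_ne_bot_of_algebraic_mem (R := Algebra.adjoin R (Set.range y))
    (I := RingHom.ker f) hne ha (halg.isAlgebraic a)
  apply h1
  rw [eq_bot_iff]
  rintro ⟨c, hc⟩ hc2
  have hc3 : f c = 0 := hc2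
  rw [Algebra.adjoin_range_eq_range_aeval] at hc
  obtain ⟨P, rfl⟩ := hc
  have : aeval b P = 0 := by
    rw [← hfy]
    rw [← hc3]
    exact (MvPolynomial.comp_aeval_apply (φ := f) y P).symm
  have hP : P = 0 := hb.1 (by rw [this, map_zero])
  subst hP
  apply Subtype.ext
  exact map_zero (aeval y)

/-- `σ` as a map between consecutive ranges. -/
def stepMap {P : Type} [CommRing P] (σ : P →ₐ[ℤ] P) (j : ℕ) :
    (σ ^ j).range →ₐ[ℤ] (σ ^ (j + 1)).range :=
  (σ.comp (σ ^ j).range.val).codRestrict _ (by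
    rintro ⟨_, u, rfl⟩
    exact ⟨u, by simp [pow_succ']⟩)

theorem stepMap_surj {P : Type} [CommRing P] (σ : P →ₐ[ℤ] P) (j : ℕ) :
    Function.Surjective (stepMap σ j) := by
  rintro ⟨_, u, rfl⟩
  refine ⟨⟨(σ ^ j) u, u, rfl⟩, ?_⟩
  apply Subtype.ext
  simp [stepMap, pow_succ']

theorem stable_ker (n : ℕ) (σ : MvPolynomial (Fin n) ℤ →ₐ[ℤ] MvPolynomial (Fin n) ℤ) :
    ∃ j ≤ n, ∀ u, (σ ^ (j + 1)) u = 0 → (σ ^ j) u = 0 := by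
  by_contra! hcon
  have hle : ∀ j, Algebra.trdeg ℤ (σ ^ j).range ≤ n := by
    intro j
    have h := trdeg_le_of_injective ((σ ^ j).range.val) Subtype.val_injective
    rw [MvPolynomial.trdeg_of_isDomain] at h
    simpa using h
  have key : ∀ j ≤ n + 1, Algebra.trdeg ℤ (σ ^ j).range + j ≤ n := by
    intro j
    induction j with
    | zero => intro _; simpa using hle 0
    | succ j ih =>
      intro hj
      have ih := ih (by omega)
      obtain ⟨u, hu, hu2⟩ := hcon j (by omega)
      have hlt : Algebra.trdeg ℤ (σ ^ (j+1)).range < Algebra.trdeg ℤ (σ ^ j).range := by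
        by_contra! hge
        have hinj := inj_of_surj_trdeg (stepMap σ j) (stepMap_surj σ j)
          ((hle j).trans_lt (Cardinal.natCast_lt_aleph0)) hge
        apply hu2
        have := (injective_iff_map_eq_zero _).1 hinj ⟨(σ ^ j) u, u, rfl⟩ (by
          apply Subtype.ext
          rw [pow_succ'] at hu; exact hu)
        simpa using congrArg Subtype.val this
      have := Cardinal.add_one_le_of_lt hlt
      calc _ = (Algebra.trdeg ℤ (σ ^ (j+1)).range + 1) + j := by push_cast; ring
        _ ≤ _ := by gcongr
        _ ≤ _ := ih
  have h := key (n + 1) le_rfl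
  have h2 : ((n + 1 : ℕ) : Cardinal) ≤ n := le_trans (by simp) h
  have := Nat.cast_le.1 h2
  omega

theorem stable_ker' (n : ℕ) (σ : MvPolynomial (Fin n) ℤ →ₐ[ℤ] MvPolynomial (Fin n) ℤ) :
    ∀ u, (σ ^ (n + 1)) u = 0 → (σ ^ n) u = 0 := by
  obtain ⟨j, hj, h⟩ := stable_ker n σ
  intro u hu
  have e1 : σ ^ (n+1) = σ ^ (j+1) * σ ^ (n - j) := by rw [← pow_add]; congr 1; omega
  have e2 : σ ^ n = σ ^ j * σ ^ (n - j) := by rw [← pow_add]; congr 1; omega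
  rw [e1] at hu
  rw [e2]
  exact h _ hu

theorem exists_rel0 (n : ℕ) (σ : MvPolynomial (Fin n) ℤ →ₐ[ℤ] MvPolynomial (Fin n) ℤ)
    (z : MvPolynomial (Fin n) ℤ) :
    ∃ Q : Polynomial (MvPolynomial (Fin n) ℤ),
      Q.map (σ ^ (n+1) : MvPolynomial (Fin n) ℤ →ₐ[ℤ] MvPolynomial (Fin n) ℤ).toRingHom ≠ 0 ∧
      (Q.map (σ ^ (n+1) : MvPolynomial (Fin n) ℤ →ₐ[ℤ] MvPolynomial (Fin n) ℤ).toRingHom).eval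
        ((σ ^ n) z) = 0 := by
  have hinj : Function.Injective (stepMap σ n) := by
    rw [injective_iff_map_eq_zero]
    rintro ⟨_, u, rfl⟩ h
    apply Subtype.ext
    have h2 := congrArg Subtype.val h
    exact stable_ker' n σ u (by rw [pow_succ']; exact h2)
  have hle := trdeg_le_of_injective _ hinj
  have hfin : Algebra.trdeg ℤ (σ ^ n).range < Cardinal.aleph0 := by
    have h := trdeg_le_of_injective ((σ ^ n).range.val) Subtype.val_injective
    rw [MvPolynomial.trdeg_of_isDomain] at h
    refine lt_of_le_of_lt h (by simp)
  obtain ⟨ι, b, hb⟩ := exists_isTranscendenceBasis' ℤ (σ ^ (n+1)).range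
  have hsub : (σ ^ (n+1)).range ≤ (σ ^ n).range := by
    rintro _ ⟨u, rfl⟩
    exact ⟨σ u, by simp [pow_succ]⟩
  let inc := Subalgebra.inclusion hsub
  have hyi : AlgebraicIndependent ℤ (inc ∘ b) :=
    hb.1.map' (Subalgebra.inclusion_injective hsub)
  have hyb : IsTranscendenceBasis ℤ (inc ∘ b) := by
    apply hyi.isTranscendenceBasis_of_trdeg_le hfin
    rw [hb.cardinalMk_eq_trdeg]; exact hle
  have halg := hyb.isAlgebraic
  obtain ⟨p, hp0, hp⟩ := halg.isAlgebraic (⟨(σ ^ n) z, z, rfl⟩ : (σ ^ n).range)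
  let g : Algebra.adjoin ℤ (Set.range (inc ∘ b)) →+* MvPolynomial (Fin n) ℤ :=
    ((σ ^ n).range.val.toRingHom).comp (algebraMap _ (σ ^ n).range)
  have hg : Function.Injective g := Subtype.val_injective.comp Subtype.val_injective
  have hgr : ∀ c, ∃ u, (σ ^ (n+1)) u = g c := by
    rintro ⟨c, hc⟩
    have : Algebra.adjoin ℤ (Set.range (inc ∘ b)) ≤ inc.range := by
      apply Algebra.adjoin_le
      rintro _ ⟨i, rfl⟩
      exact ⟨b i, rfl⟩
    obtain ⟨⟨_, u, rfl⟩, rfl⟩ := this hc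
    exact ⟨u, rfl⟩
  have hl : p.map g ∈ Polynomial.lifts (σ ^ (n+1)).toRingHom := by
    rw [Polynomial.lifts_iff_coeff_lifts]
    intro k
    obtain ⟨u, hu⟩ := hgr (p.coeff k)
    exact ⟨u, by rw [Polynomial.coeff_map]; exact hu⟩
  obtain ⟨Q, hQ⟩ := (Polynomial.mem_lifts _).1 hl
  refine ⟨Q, ?_, ?_⟩
  · rw [hQ]; exact (Polynomial.map_ne_zero_iff hg).2 hp0
  · rw [hQ, Polynomial.eval_map]
    have h3 := congrArg ((σ ^ n).range.val) hp
    rw [Polynomial.aeval_def, map_zero] at h3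
    have h4 := Polynomial.hom_eval₂ p (algebraMap _ (σ ^ n).range) ((σ ^ n).range.val.toRingHom)
      (⟨(σ ^ n) z, z, rfl⟩ : (σ ^ n).range)
    exact h4.symm.trans h3

theorem exists_rel (n : ℕ) (σ : MvPolynomial (Fin n) ℤ →ₐ[ℤ] MvPolynomial (Fin n) ℤ)
    (z : MvPolynomial (Fin n) ℤ) :
    ∃ Q : Polynomial (MvPolynomial (Fin n) ℤ),
      (σ ^ n) ((Q.map σ.toRingHom).eval z) = 0 ∧
      (σ ^ n) ((Q.derivative.map σ.toRingHom).eval z) ≠ 0 := by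
  classical
  have hex : ∃ d, ∃ Q : Polynomial (MvPolynomial (Fin n) ℤ),
      (Q.map (σ ^ (n+1)).toRingHom).natDegree = d ∧
      Q.map (σ ^ (n+1)).toRingHom ≠ 0 ∧
      (Q.map (σ ^ (n+1)).toRingHom).eval ((σ ^ n) z) = 0 := by
    obtain ⟨Q, h1, h2⟩ := exists_rel0 n σ z
    exact ⟨_, Q, rfl, h1, h2⟩
  have conv : ∀ Q : Polynomial (MvPolynomial (Fin n) ℤ),
      (σ ^ n) ((Q.map σ.toRingHom).eval z) =
        (Q.map (σ ^ (n+1)).toRingHom).eval ((σ ^ n) z) := by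
    intro Q
    rw [Polynomial.eval_map, Polynomial.eval_map]
    have h := Polynomial.hom_eval₂ Q σ.toRingHom (σ ^ n).toRingHom z
    refine h.trans ?_
    congr 1
  obtain ⟨Q, hd, h0, h1⟩ := Nat.find_spec hex
  refine ⟨Q, by rw [conv]; exact h1, ?_⟩
  rw [conv]
  intro h2
  have hdeg : (Q.map (σ ^ (n+1)).toRingHom).natDegree ≠ 0 := by
    intro hz
    rw [Polynomial.natDegree_eq_zero] at hz
    obtain ⟨c, hc⟩ := hz
    rw [← hc] at h0 h1
    simp at h0 h1
    exact h0 h1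
  have hlt := Polynomial.natDegree_derivative_lt hdeg
  rw [Polynomial.derivative_map] at hlt
  refine Nat.find_min hex (hd ▸ hlt) ⟨Q.derivative, rfl, ?_, h2⟩
  intro hz
  rw [← Polynomial.derivative_map] at hz
  exact hdeg (Polynomial.derivative_eq_zero.1 hz)

section Reduction

variable {n : ℕ} {k : Type} [Field k]

/-- Polynomials all of whose monomials have degree `< d`. -/
def Lo (n : ℕ) (k : Type) [Field k] (d : ℕ) : Submodule k (MvPolynomial (Fin n) k) :=
  restrictSupport k {m | m.degree < d}

theorem mem_Lo {d : ℕ} {f : MvPolynomial (Fin n) k} :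
    f ∈ Lo n k d ↔ ∀ m ∈ f.support, m.degree < d := by
  rw [Lo, mem_restrictSupport_iff]; rfl

theorem Lo_mul {d e : ℕ} {r v : MvPolynomial (Fin n) k} (hr : r ∈ Lo n k d)
    (hv : v ∈ Lo n k (e + 1)) : r * v ∈ Lo n k (d + e) := by
  classical
  rw [mem_Lo] at *
  intro m hm
  obtain ⟨a, ha, b, hb, rfl⟩ := Finset.mem_add.1 (support_mul r v hm)
  have h1 := hr a ha
  have h2 := hv b hb
  rw [map_add]
  omega

/-- `u` is monic with leading monomial `a`. -/
def IsLead (u : MvPolynomial (Fin n) k) (a : Fin n →₀ ℕ) : Prop :=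
  u - monomial a 1 ∈ Lo n k a.degree

theorem mono_mem_Lo (a : Fin n →₀ ℕ) (c : k) : monomial a c ∈ Lo n k (a.degree + 1) := by
  classical
  rw [mem_Lo]
  intro m hm
  have := support_monomial_subset hm
  simp at this
  subst this
  omega

theorem Lo_mono {d e : ℕ} (h : d ≤ e) : Lo n k d ≤ Lo n k e := by
  intro f hf
  rw [mem_Lo] at *
  intro m hm
  exact (hf m hm).trans_le h

theorem IsLead.mul {u v : MvPolynomial (Fin n) k} {a b : Fin n →₀ ℕ} (hu : IsLead u a)
    (hv : IsLead v b) : IsLead (u * v) (a + b) := by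
  unfold IsLead at *
  have hv' : v ∈ Lo n k (b.degree + 1) := by
    have := add_mem (Lo_mono (Nat.le_succ _) hv) (mono_mem_Lo (k := k) b 1)
    simpa using this
  have e : u * v - monomial (a + b) 1 =
      (u - monomial a 1) * v + (v - monomial b 1) * monomial a 1 := by
    have : (monomial (a + b) 1 : MvPolynomial (Fin n) k) = monomial a 1 * monomial b 1 := by
      rw [monomial_mul, one_mul]
    rw [this]; ring
  rw [e, map_add]
  refine add_mem (Lo_mul hu hv') ?_
  have := Lo_mul hv (mono_mem_Lo (k := k) a 1)
  rwa [add_comm] at this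

theorem IsLead.one : IsLead (1 : MvPolynomial (Fin n) k) 0 := by
  unfold IsLead
  have : (1 : MvPolynomial (Fin n) k) - monomial 0 1 = 0 := by simp
  rw [this]; exact zero_mem _

theorem IsLead.mono (a : Fin n →₀ ℕ) : IsLead (monomial a (1 : k)) a := by
  unfold IsLead
  rw [sub_self]; exact zero_mem _

theorem IsLead.pow {u : MvPolynomial (Fin n) k} {a : Fin n →₀ ℕ} (hu : IsLead u a) (j : ℕ) :
    IsLead (u ^ j) (j • a) := by
  induction j with
  | zero => simpa using IsLead.one
  | succ j ih => rw [pow_succ, succ_nsmul]; exact ih.mul hu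

theorem IsLead.prod (s : Finset (Fin n)) {u : Fin n → MvPolynomial (Fin n) k}
    {a : Fin n → Fin n →₀ ℕ} (hu : ∀ i, IsLead (u i) (a i)) :
    IsLead (∏ i ∈ s, u i) (∑ i ∈ s, a i) := by
  classical
  induction s using Finset.induction_on with
  | empty => simpa using IsLead.one
  | insert i s hi ih => rw [Finset.prod_insert hi, Finset.sum_insert hi]; exact (hu i).mul ih

/-- The polynomials `x_i^Q - Ψ_i`. -/
def gQ (Q : ℕ) (Ψ : Fin n → MvPolynomial (Fin n) k) (i : Fin n) : MvPolynomial (Fin n) k :=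
  X i ^ Q - Ψ i

/-- Image of the monomial `m` under the triangular map. -/
def redMon (Q : ℕ) (Ψ : Fin n → MvPolynomial (Fin n) k) (m : Fin n →₀ ℕ) :
    MvPolynomial (Fin n) k :=
  monomial (m.mapRange (· % Q) (Nat.zero_mod Q)) 1 * ∏ i, gQ Q Ψ i ^ (m i / Q)

/-- The triangular linear map. -/
def redL (Q : ℕ) (Ψ : Fin n → MvPolynomial (Fin n) k) :
    MvPolynomial (Fin n) k →ₗ[k] MvPolynomial (Fin n) k :=
  (basisMonomials (Fin n) k).constr k (redMon Q Ψ)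

theorem redL_mono (Q : ℕ) (Ψ : Fin n → MvPolynomial (Fin n) k) (m : Fin n →₀ ℕ) :
    redL Q Ψ (monomial m 1) = redMon Q Ψ m := by
  have := (basisMonomials (Fin n) k).constr_basis k (redMon Q Ψ) m
  rwa [coe_basisMonomials] at this

theorem redMon_lead {Q : ℕ} {Ψ : Fin n → MvPolynomial (Fin n) k}
    (hΨ : ∀ i, Ψ i ∈ Lo n k Q) (m : Fin n →₀ ℕ) : IsLead (redMon Q Ψ m) m := by
  have hg : ∀ i, IsLead (gQ Q Ψ i) (Finsupp.single i Q) := by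
    intro i
    unfold IsLead gQ
    rw [X_pow_eq_monomial, sub_sub_cancel_left, Finsupp.degree_single]
    exact neg_mem (hΨ i)
  have h := (IsLead.mono (k := k) (m.mapRange (· % Q) (Nat.zero_mod Q))).mul
    (IsLead.prod Finset.univ (fun i => (hg i).pow (m i / Q)))
  have e : m.mapRange (· % Q) (Nat.zero_mod Q) + ∑ i, (m i / Q) • Finsupp.single i Q = m := by
    ext j
    simp [Finsupp.single_apply]
    rw [mul_comm]; exact Nat.mod_add_div _ _
  rwa [e] at h

theorem redL_sub_mem {Q : ℕ} {Ψ : Fin n → MvPolynomial (Fin n) k}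
    (hΨ : ∀ i, Ψ i ∈ Lo n k Q) {d : ℕ} {f : MvPolynomial (Fin n) k} (hf : f ∈ Lo n k (d + 1)) :
    redL Q Ψ f - f ∈ Lo n k d := by
  rw [mem_Lo] at hf
  have e : redL Q Ψ f - f =
      ∑ m ∈ f.support, coeff m f • (redMon Q Ψ m - monomial m 1) := by
    have e1 : f = ∑ m ∈ f.support, coeff m f • monomial m (1 : k) := by
      conv_lhs => rw [f.as_sum]
      simp [smul_monomial]
    conv_lhs => rw [e1]
    rw [map_sum, ← Finset.sum_sub_distrib]
    refine Finset.sum_congr rfl fun m _ => ?_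
    rw [map_smul, redL_mono, smul_sub]
  rw [e]
  refine sum_mem fun m hm => Submodule.smul_mem _ _ ?_
  exact Lo_mono (Nat.lt_succ_iff.1 (hf m hm)) (redMon_lead hΨ m)

theorem redL_surj {Q : ℕ} {Ψ : Fin n → MvPolynomial (Fin n) k}
    (hΨ : ∀ i, Ψ i ∈ Lo n k Q) (f : MvPolynomial (Fin n) k) : ∃ h, redL Q Ψ h = f := by
  have key : ∀ d, ∀ f ∈ Lo n k d, ∃ h, redL Q Ψ h = f := by
    intro d
    induction d with
    | zero =>
      intro f hf
      refine ⟨0, ?_⟩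
      rw [mem_Lo] at hf
      have : f.support = ∅ := Finset.eq_empty_of_forall_notMem (fun m hm => by simpa using hf m hm)
      rw [map_zero, MvPolynomial.support_eq_empty.1 this]
    | succ d ih =>
      intro f hf
      obtain ⟨h, hh⟩ := ih _ (redL_sub_mem hΨ hf)
      exact ⟨f - h, by rw [map_sub, hh]; abel⟩
  refine key (f.totalDegree + 1) f ?_
  rw [mem_Lo]
  intro m hm
  exact Nat.lt_succ_iff.2 (le_totalDegree hm)

theorem redL_top {Q : ℕ} {Ψ : Fin n → MvPolynomial (Fin n) k}
    (hΨ : ∀ i, Ψ i ∈ Lo n k Q) {f : MvPolynomial (Fin n) k} (hf : f ≠ 0) :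
    ∃ m ∈ f.support, m ∈ (redL Q Ψ f).support := by
  obtain ⟨m, hm, hmax⟩ := Finset.exists_max_image f.support (fun m => m.degree)
    (MvPolynomial.support_nonempty.2 hf)
  refine ⟨m, hm, ?_⟩
  have h1 : redL Q Ψ f - f ∈ Lo n k m.degree := redL_sub_mem hΨ (by
    rw [mem_Lo]; intro a ha; exact Nat.lt_succ_iff.2 (hmax a ha))
  rw [mem_Lo] at h1
  have h2 : coeff m (redL Q Ψ f - f) = 0 := by
    by_contra hne
    exact lt_irrefl _ (h1 m (mem_support_iff.2 hne))
  rw [mem_support_iff] at *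
  rw [coeff_sub, sub_eq_zero] at h2
  rwa [h2]

theorem redL_mul {Q : ℕ} (hQ : 0 < Q) (Ψ : Fin n → MvPolynomial (Fin n) k) (i : Fin n)
    (h : MvPolynomial (Fin n) k) : redL Q Ψ (X i ^ Q * h) = gQ Q Ψ i * redL Q Ψ h := by
  have hl : (redL Q Ψ).comp (LinearMap.mulLeft k (X i ^ Q)) =
      (LinearMap.mulLeft k (gQ Q Ψ i)).comp (redL Q Ψ) := by
    refine (basisMonomials (Fin n) k).ext fun m => ?_
    rw [coe_basisMonomials]
    simp only [LinearMap.comp_apply, LinearMap.mulLeft_apply]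
    rw [X_pow_eq_monomial, monomial_mul, one_mul, redL_mono, redL_mono]
    unfold redMon
    have e1 : (Finsupp.single i Q + m).mapRange (· % Q) (Nat.zero_mod Q) =
        m.mapRange (· % Q) (Nat.zero_mod Q) := by
      ext j
      by_cases hij : i = j
      · subst hij; simp
      · simp [hij]
    have e2 : ∏ j, gQ Q Ψ j ^ ((Finsupp.single i Q + m) j / Q) =
        gQ Q Ψ i * ∏ j, gQ Q Ψ j ^ (m j / Q) := by
      classical
      rw [← Finset.mul_prod_erase Finset.univ _ (Finset.mem_univ i),
        ← Finset.mul_prod_erase Finset.univ (fun j => gQ Q Ψ j ^ (m j / Q)) (Finset.mem_univ i),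
        ← mul_assoc]
      congr 1
      · simp [Nat.add_div_left _ hQ, pow_succ']
      · refine Finset.prod_congr rfl fun j hj => ?_
        have : i ≠ j := fun h => by simp [h] at hj
        simp [this]
    rw [e1, e2]; ring
  exact LinearMap.congr_fun hl h

/-- Every element of the ideal `(x_i^Q - Ψ_i)` is the image of a combination of non-reduced
monomials. -/
theorem mem_ideal_redL {Q : ℕ} (hQ : 0 < Q) {Ψ : Fin n → MvPolynomial (Fin n) k}
    (hΨ : ∀ i, Ψ i ∈ Lo n k Q) {f : MvPolynomial (Fin n) k}
    (hf : f ∈ Ideal.span (Set.range (gQ Q Ψ))) :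
    ∃ h, redL Q Ψ h = f ∧ ∀ m ∈ h.support, Q ≤ m.degree := by
  classical
  obtain ⟨c, rfl⟩ := (Ideal.mem_span_range_iff_exists_fun).1 hf
  choose h hh using fun i => redL_surj hΨ (c i)
  refine ⟨∑ i, X i ^ Q * h i, ?_, ?_⟩
  · rw [map_sum]
    refine Finset.sum_congr rfl fun i _ => ?_
    rw [redL_mul hQ, hh, mul_comm]
  · intro m hm
    obtain ⟨i, -, hi⟩ := Finset.mem_biUnion.1 (support_sum hm)
    obtain ⟨a, ha, b, hb, rfl⟩ := Finset.mem_add.1 (support_mul _ _ hi)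
    rw [X_pow_eq_monomial] at ha
    have := support_monomial_subset ha
    simp at this
    subst this
    rw [map_add, Finsupp.degree_single]
    omega

theorem low_degree_mem {Q : ℕ} (hQ : 0 < Q) {Ψ : Fin n → MvPolynomial (Fin n) k}
    (hΨ : ∀ i, Ψ i ∈ Lo n k Q) {f : MvPolynomial (Fin n) k}
    (hf : f ∈ Ideal.span (Set.range (gQ Q Ψ))) (hd : f ∈ Lo n k Q) : f = 0 := by
  obtain ⟨h, rfl, hh⟩ := mem_ideal_redL hQ hΨ hf
  by_contra hne
  have h0 : h ≠ 0 := fun h0 => hne (by rw [h0, map_zero])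
  obtain ⟨m, h1, h2⟩ := redL_top hΨ h0
  have := hh m h1
  have := mem_Lo.1 hd m h2
  omega

theorem span_quot {Q : ℕ} (hQ : 0 < Q) {Ψ : Fin n → MvPolynomial (Fin n) k}
    (hΨ : ∀ i, Ψ i ∈ Lo n k Q) :
    Submodule.span k (Set.range (fun e : Fin n → Fin Q =>
      Ideal.Quotient.mkₐ k (Ideal.span (Set.range (gQ Q Ψ)))
        (redMon Q Ψ (Finsupp.equivFunOnFinite.symm fun i => (e i : ℕ))))) = ⊤ := by
  rw [eq_top_iff]
  rintro z -
  obtain ⟨f, rfl⟩ := Ideal.Quotient.mkₐ_surjective k _ z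
  obtain ⟨h, rfl⟩ := redL_surj hΨ f
  have e1 : h = ∑ m ∈ h.support, coeff m h • monomial m (1 : k) := by
    conv_lhs => rw [h.as_sum]
    simp [smul_monomial]
  rw [e1, map_sum, map_sum]
  refine sum_mem fun m _ => ?_
  rw [map_smul, map_smul, redL_mono]
  refine Submodule.smul_mem _ _ ?_
  by_cases hm : ∀ i, m i < Q
  · apply Submodule.subset_span
    refine ⟨fun i => ⟨m i, hm i⟩, ?_⟩
    simp only
    congr 2
    ext i
    simp
  · push Not at hm
    obtain ⟨i, hi⟩ := hm
    have : Ideal.Quotient.mkₐ k (Ideal.span (Set.range (gQ Q Ψ))) (redMon Q Ψ m) = 0 := by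
      refine Ideal.Quotient.eq_zero_iff_mem.2 ?_
      refine Ideal.mul_mem_left _ _ ?_
      refine Ideal.mem_of_dvd _ (Finset.dvd_prod_of_mem _ (Finset.mem_univ i)) ?_
      exact Ideal.pow_mem_of_mem _ (Ideal.subset_span (Set.mem_range_self i)) _ (Nat.div_pos hi hQ)
    rw [this]; exact zero_mem _

theorem nilp_pow {A : Type} [CommRing A] [Algebra k A] [Module.Finite k A] {N : ℕ}
    (hN : Module.finrank k A ≤ N) {d : A} (hd : IsNilpotent d) : d ^ N = 0 := by
  have h1 : IsNilpotent (Algebra.lmul k A d) := hd.map _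
  have h2 : (Algebra.lmul k A d) ^ (Module.finrank k A) = 0 := by
    have h := LinearMap.aeval_self_charpoly (Algebra.lmul k A d)
    rwa [IsNilpotent.charpoly_eq_X_pow_finrank h1, map_pow, Polynomial.aeval_X] at h
  have h3 : (Algebra.lmul k A) (d ^ (Module.finrank k A)) = 0 := by rw [map_pow, h2]
  have h4 : d ^ (Module.finrank k A) = 0 := by
    have := LinearMap.congr_fun h3 1
    simpa using this
  exact pow_eq_zero_of_le hN h4

end Reduction

theorem exists_point (p : ℕ) [Fact p.Prime] {n m : ℕ}
    (Ψ : Fin n → MvPolynomial (Fin n) (ZMod p)) (D : MvPolynomial (Fin n) (ZMod p))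
    (hm : m ≠ 0)
    (hΨ : ∀ i, (Ψ i).totalDegree < p ^ m)
    (hD : ((substEnd (ZMod p) Ψ ^ n) D).totalDegree < p ^ m)
    (hD0 : (substEnd (ZMod p) Ψ ^ n) D ≠ 0) :
    ∃ l : ℕ, 1 ≤ l ∧ ∃ x : Fin n → GaloisField p l,
      (∀ i, aeval x (Ψ i) = x i ^ p ^ m) ∧ aeval x D ≠ 0 := by
  have hQ : 0 < p ^ m := pow_pos (Fact.out : p.Prime).pos _
  have hlo : ∀ f : MvPolynomial (Fin n) (ZMod p), f.totalDegree < p ^ m →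
      f ∈ Lo n (ZMod p) (p ^ m) := fun f hf => mem_Lo.2 fun a ha => (le_totalDegree ha).trans_lt hf
  have hΨ' := fun i => hlo _ (hΨ i)
  set I := Ideal.span (Set.range (gQ (p ^ m) Ψ)) with hI
  let A := MvPolynomial (Fin n) (ZMod p) ⧸ I
  let mk : MvPolynomial (Fin n) (ZMod p) →ₐ[ZMod p] A := Ideal.Quotient.mkₐ (ZMod p) I
  have hspan := span_quot hQ hΨ'
  have hfin : Module.Finite (ZMod p) A := ⟨Submodule.fg_def.2 ⟨_, Set.finite_range _, hspan⟩⟩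
  have hrank : Module.finrank (ZMod p) A ≤ (p ^ m) ^ n := by
    have := finrank_le_of_span_eq_top hspan
    simpa using this
  have hnt : (1 : A) ≠ 0 := by
    intro h
    have h1 : (1 : MvPolynomial (Fin n) (ZMod p)) ∈ I :=
      Ideal.Quotient.eq_zero_iff_mem.1 (by rw [map_one]; exact h)
    exact one_ne_zero (low_degree_mem hQ hΨ' h1 (hlo _ (by simpa using hQ)))
  have : Nontrivial A := ⟨1, 0, hnt⟩
  have : CharP A p := charP_of_injective_algebraMap (algebraMap (ZMod p) A).injective p
  have hfrob : ∀ f, mk (substEnd (ZMod p) Ψ f) = mk f ^ p ^ m := by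
    have : (mk : MvPolynomial (Fin n) (ZMod p) →+* A).comp (substEnd (ZMod p) Ψ) =
      (iterateFrobenius A p m).comp (mk : MvPolynomial (Fin n) (ZMod p) →+* A) := by
      apply MvPolynomial.ringHom_ext'
      · exact Subsingleton.elim _ _
      · intro i
        simp [substEnd, iterateFrobenius_def]
        rw [← map_pow, eq_comm, ← sub_eq_zero, ← map_sub]
        exact Ideal.Quotient.eq_zero_iff_mem.2 (Ideal.subset_span ⟨i, rfl⟩)
    exact fun f => RingHom.congr_fun this f
  have hfrob' : ∀ j f, mk ((substEnd (ZMod p) Ψ ^ j) f) = mk f ^ (p ^ m) ^ j := by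
    intro j
    induction j with
    | zero => intro f; simp
    | succ j ih =>
      intro f
      rw [pow_succ', AlgHom.mul_apply, hfrob, ih, ← pow_mul, ← pow_succ]
  have hnil : ¬ IsNilpotent (mk D) := by
    intro h
    have h1 := nilp_pow hrank h
    rw [← hfrob'] at h1
    exact hD0 (low_degree_mem hQ hΨ' (Ideal.Quotient.eq_zero_iff_mem.1 h1) (hlo _ hD))
  rw [nilpotent_iff_mem_prime] at hnil
  push Not at hnil
  obtain ⟨𝔭, h𝔭, hDp⟩ := hnil
  have : Finite A := Module.finite_of_finite (ZMod p)
  have hmax : 𝔭.IsMaximal := by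
    have : IsDomain (A ⧸ 𝔭) := Ideal.Quotient.isDomain 𝔭
    have : Finite (A ⧸ 𝔭) := Finite.of_surjective _ (Ideal.Quotient.mk_surjective (I := 𝔭))
    exact Ideal.Quotient.maximal_of_isField 𝔭 (Finite.isField_of_domain (A ⧸ 𝔭))
  let K := A ⧸ 𝔭
  let _ : Field K := Ideal.Quotient.field 𝔭
  have : Finite K := Finite.of_surjective _ (Ideal.Quotient.mk_surjective (I := 𝔭))
  have : CharP K p := charP_of_injective_algebraMap (algebraMap (ZMod p) K).injective p
  have : Fintype K := Fintype.ofFinite K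
  obtain ⟨l, hl, hcard⟩ := FiniteField.card K p
  let e : K ≃ₐ[ZMod p] GaloisField p l :=
    GaloisField.algEquivGaloisField p l (by rw [Nat.card_eq_fintype_card, hcard])
  let ψ : MvPolynomial (Fin n) (ZMod p) →ₐ[ZMod p] GaloisField p l :=
    (e : K →ₐ[ZMod p] GaloisField p l).comp ((Ideal.Quotient.mkₐ (ZMod p) 𝔭).comp mk)
  have hψ : ∀ f, ψ f = aeval (fun i => ψ (X i)) f := fun f => by
    conv_lhs => rw [aeval_unique ψ]
    rfl
  refine ⟨l, l.2, fun i => ψ (X i), fun i => ?_, ?_⟩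
  · rw [← hψ]
    have h1 : Ψ i = substEnd (ZMod p) Ψ (X i) := by simp [substEnd]
    have h2 : ψ (Ψ i) = e (Ideal.Quotient.mkₐ (ZMod p) 𝔭 (mk (Ψ i))) := rfl
    have h3 : ψ (X i) = e (Ideal.Quotient.mkₐ (ZMod p) 𝔭 (mk (X i))) := rfl
    change ψ (Ψ i) = ψ (X i) ^ p ^ m
    rw [h2, h3, h1, hfrob, map_pow, map_pow]
  · rw [← hψ]
    intro h
    have h1 : e (Ideal.Quotient.mkₐ (ZMod p) 𝔭 (mk D)) = 0 := h
    rw [EmbeddingLike.map_eq_zero_iff] at h1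
    exact hDp (Ideal.Quotient.eq_zero_iff_mem.1 h1)

section Dynamics

variable {n : ℕ} {O : Type} [CommRing O]

/-- All coordinates of `v` are divisible by `P ^ k`. -/
def Dv (P : O) (k : ℕ) (v : Fin n → O) : Prop := ∀ i, P ^ k ∣ v i

theorem Dv.add {P : O} {k : ℕ} {v w : Fin n → O} (hv : Dv P k v) (hw : Dv P k w) :
    Dv P k (v + w) := fun i => dvd_add (hv i) (hw i)

theorem Dv.sub {P : O} {k : ℕ} {v w : Fin n → O} (hv : Dv P k v) (hw : Dv P k w) :
    Dv P k (v - w) := fun i => dvd_sub (hv i) (hw i)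

theorem Dv.neg {P : O} {k : ℕ} {v : Fin n → O} (hv : Dv P k v) :
    Dv P k (-v) := fun i => (dvd_neg).2 (hv i)

theorem Dv.zero {P : O} {k : ℕ} : Dv P k (0 : Fin n → O) := fun _ => dvd_zero _

theorem Dv.mono {P : O} {k j : ℕ} (h : j ≤ k) {v : Fin n → O} (hv : Dv P k v) : Dv P j v :=
  fun i => (pow_dvd_pow P h).trans (hv i)

theorem Dv.mulVec {P : O} {k : ℕ} {v : Fin n → O} (hv : Dv P k v)
    (M : Matrix (Fin n) (Fin n) O) : Dv P k (M.mulVec v) := by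
  intro i
  change P ^ k ∣ ∑ j, M i j * v j
  exact Finset.dvd_sum fun j _ => Dvd.dvd.mul_left (hv j) _

theorem Dv.mulVec_succ {P : O} {k : ℕ} {v : Fin n → O} (hv : Dv P k v)
    {M : Matrix (Fin n) (Fin n) O} (hM : ∀ i j, P ∣ M i j) : Dv P (k + 1) (M.mulVec v) := by
  intro i
  change P ^ (k + 1) ∣ ∑ j, M i j * v j
  refine Finset.dvd_sum fun j _ => ?_
  rw [pow_succ']
  exact mul_dvd_mul (hM i j) (hv j)

/-- `T` has approximate derivative `M` on `U`. -/
def HasD (P : O) (U : Set (Fin n → O)) (T : (Fin n → O) → (Fin n → O))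
    (M : Matrix (Fin n) (Fin n) O) : Prop :=
  ∀ k, 1 ≤ k → ∀ X ∈ U, ∀ X' ∈ U, Dv P k (X' - X) →
    Dv P (k + 1) (T X' - T X - M.mulVec (X' - X))

theorem HasD.dv {P : O} {U : Set (Fin n → O)} {T : (Fin n → O) → (Fin n → O)}
    {M : Matrix (Fin n) (Fin n) O} (h : HasD P U T M) {k : ℕ} (hk : 1 ≤ k) {X X' : Fin n → O}
    (hX : X ∈ U) (hX' : X' ∈ U) (hd : Dv P k (X' - X)) : Dv P k (T X' - T X) := by
  have h1 := ((h k hk X hX X' hX' hd).mono (Nat.le_succ k)).add (hd.mulVec M)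
  simpa using h1

theorem HasD.comp {P : O} {U U' : Set (Fin n → O)} {T T' : (Fin n → O) → (Fin n → O)}
    {M M' : Matrix (Fin n) (Fin n) O} (h : HasD P U T M) (h' : HasD P U' T' M')
    (hU : Set.MapsTo T U U') : HasD P U (T' ∘ T) (M' * M) := by
  intro k hk X hX X' hX' hd
  have h1 := h' k hk _ (hU hX) _ (hU hX') (h.dv hk hX hX' hd)
  have h2 := (h k hk X hX X' hX' hd).mulVec M'
  have h3 := h1.add h2
  rw [Matrix.mulVec_sub M' (T X' - T X) (M.mulVec (X' - X)), Matrix.mulVec_mulVec] at h3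
  convert h3 using 1
  simp only [Function.comp_apply]
  abel

theorem HasD.id {P : O} {U : Set (Fin n → O)} : HasD P U id 1 := by
  intro k hk X hX X' hX' hd
  simpa using Dv.zero

theorem HasD.iterate {P : O} {U : Set (Fin n → O)} {T : (Fin n → O) → (Fin n → O)}
    {M : Matrix (Fin n) (Fin n) O} (h : HasD P U T M) (hU : Set.MapsTo T U U) (j : ℕ) :
    HasD P U (T^[j]) (M ^ j) := by
  induction j with
  | zero => simpa using HasD.id
  | succ j ih =>
    rw [Function.iterate_succ', pow_succ']
    exact ih.comp h (hU.iterate j)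

theorem HasD.mono {P : O} {U U' : Set (Fin n → O)} {T : (Fin n → O) → (Fin n → O)}
    {M : Matrix (Fin n) (Fin n) O} (h : HasD P U T M) (hU : U' ⊆ U) : HasD P U' T M :=
  fun k hk X hX X' hX' hd => h k hk X (hU hX) X' (hU hX') hd

/-- Injectivity modulo all powers of `P`. -/
def InjP (P : O) (S : Set (Fin n → O)) (T : (Fin n → O) → (Fin n → O)) : Prop :=
  ∀ k, 1 ≤ k → ∀ X ∈ S, ∀ X' ∈ S, Dv P k (T X - T X') → Dv P k (X - X')

theorem InjP.iterate {P : O} {S : Set (Fin n → O)} {T : (Fin n → O) → (Fin n → O)}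
    (h : InjP P S T) (hS : Set.MapsTo T S S) (j : ℕ) : InjP P S (T^[j]) := by
  induction j with
  | zero => intro k hk X hX X' hX' hd; exact hd
  | succ j ih =>
    intro k hk X hX X' hX' hd
    rw [Function.iterate_succ'] at hd
    exact ih k hk X hX X' hX' (h k hk _ (hS.iterate j hX) _ (hS.iterate j hX') hd)

theorem period_step (p : ℕ) {S : Set (Fin n → O)} {T : (Fin n → O) → (Fin n → O)}
    {N : Matrix (Fin n) (Fin n) O} (hS : Set.MapsTo T S S) (hT : HasD (p : O) S T N)
    (hN : ∀ i j, (p : O) ∣ (N * N - N) i j) (hinj : InjP (p : O) S T) {k : ℕ} (hk : 1 ≤ k)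
    (h : ∀ X ∈ S, Dv (p : O) k (T X - X)) :
    ∀ X ∈ S, Dv (p : O) (k + 1) (T^[p] X - X) := by
  intro X hX
  have hmem : ∀ j, T^[j] X ∈ S := fun j => hS.iterate j hX
  set d0 := T X - X with hd0
  have key : ∀ j, Dv (p : O) (k + 1) (T^[j + 2] X - T^[j + 1] X - N.mulVec d0) := by
    intro j
    induction j with
    | zero => exact hT k hk X hX (T X) (hS hX) (h X hX)
    | succ j ih =>
      have hd : Dv (p : O) k (T^[j + 2] X - T^[j + 1] X) := by
        have := h _ (hmem (j + 1))
        rwa [← Function.iterate_succ_apply' T] at this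
      have h1 := hT k hk _ (hmem (j + 1)) _ (hmem (j + 2)) hd
      rw [← Function.iterate_succ_apply' T, ← Function.iterate_succ_apply' T] at h1
      have h2 := ih.mulVec N
      have h3 := (h X hX).mulVec_succ hN
      have h4 := (h1.add h2).add h3
      rw [Matrix.mulVec_sub N _ (N.mulVec d0), Matrix.mulVec_mulVec, Matrix.sub_mulVec,
        ← hd0] at h4
      convert h4 using 1
      abel
  have sum : ∀ j, Dv (p : O) (k + 1) (T^[j + 1] X - T X - (j : O) • N.mulVec d0) := by
    intro j
    induction j with
    | zero => simpa using Dv.zero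
    | succ j ih =>
      have := ih.add (key j)
      convert this using 1
      push_cast
      rw [add_smul, one_smul]
      abel
  have h5 : Dv (p : O) (k + 1) ((p : O) • N.mulVec d0) := by
    intro i
    rw [pow_succ']
    exact mul_dvd_mul_left _ ((h X hX).mulVec N i)
  have h6 := (sum p).add h5
  rw [sub_add_cancel, Function.iterate_succ_apply'] at h6
  exact hinj (k + 1) (by omega) _ (hmem p) _ hX h6

theorem period_all (p : ℕ) {S : Set (Fin n → O)} {K : Type} [Field K] (π : O →+* K)
    (hker : RingHom.ker π = Ideal.span {(p : O)})
    {T : (Fin n → O) → (Fin n → O)}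
    {N : Matrix (Fin n) (Fin n) O} (hS : Set.MapsTo T S S) (hT : HasD (p : O) S T N)
    (hN : IsIdempotentElem (π.mapMatrix N)) (hinj : InjP (p : O) S T)
    (h : ∀ X ∈ S, Dv (p : O) 1 (T X - X)) (k : ℕ) :
    ∀ X ∈ S, Dv (p : O) (k + 1) (T^[p ^ k] X - X) := by
  induction k with
  | zero => simpa using h
  | succ k ih =>
    intro X hX
    rw [pow_succ, Function.iterate_mul]
    refine period_step p (hS.iterate _) (hT.iterate hS (p ^ k)) ?_ (hinj.iterate hS _)
      (by omega) ih X hX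
    intro i j
    rw [← Ideal.mem_span_singleton, ← hker, RingHom.mem_ker]
    have h1 : π.mapMatrix (N ^ p ^ k * N ^ p ^ k - N ^ p ^ k) = 0 := by
      rw [map_sub, map_mul, map_pow, sub_eq_zero]
      exact (hN.pow (p ^ k))
    exact congrFun (congrFun h1 i) j

theorem poly_taylor (P : O) (X0 : Fin n → O) (f : MvPolynomial (Fin n) ℤ) :
    ∃ c : Fin n → O, ∀ k, 1 ≤ k → ∀ X X', Dv P 1 (X - X0) → Dv P 1 (X' - X0) → Dv P k (X' - X) →
      P ^ (k + 1) ∣ aeval X' f - aeval X f - ∑ j, c j * (X' j - X j) := by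
  have hcong : ∀ (f : MvPolynomial (Fin n) ℤ) k (X X' : Fin n → O), Dv P k (X' - X) →
      P ^ k ∣ aeval X' f - aeval X f := by
    intro f k X X' h
    induction f using MvPolynomial.induction_on with
    | C a => simp
    | add f g hf hg =>
      rw [map_add, map_add, add_sub_add_comm]; exact dvd_add hf hg
    | mul_X f i hf =>
      rw [map_mul, map_mul, aeval_X, aeval_X]
      have : aeval X' f * X' i - aeval X f * X i =
        (aeval X' f - aeval X f) * X' i + aeval X f * (X' i - X i) := by ring
      rw [this]
      exact dvd_add (Dvd.dvd.mul_right hf _) (Dvd.dvd.mul_left (h i) _)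
  induction f using MvPolynomial.induction_on with
  | C a => exact ⟨0, by simp⟩
  | add f g hf hg =>
    obtain ⟨c, hc⟩ := hf
    obtain ⟨d, hd⟩ := hg
    refine ⟨c + d, fun k hk X X' h1 h2 h3 => ?_⟩
    have := dvd_add (hc k hk X X' h1 h2 h3) (hd k hk X X' h1 h2 h3)
    convert this using 1
    simp only [map_add, Pi.add_apply, add_mul, Finset.sum_add_distrib]
    ring
  | mul_X f i hf =>
    classical
    obtain ⟨c, hc⟩ := hf
    refine ⟨fun j => c j * X0 i + if j = i then aeval X0 f else 0, fun k hk X X' h1 h2 h3 => ?_⟩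
    have e : aeval X' (f * MvPolynomial.X i) - aeval X (f * MvPolynomial.X i) -
        ∑ j, (c j * X0 i + if j = i then aeval X0 f else 0) * (X' j - X j) =
        (aeval X' f - aeval X f - ∑ j, c j * (X' j - X j)) * X0 i
        + (aeval X' f - aeval X f) * (X i - X0 i)
        + (aeval X' f - aeval X0 f) * (X' i - X i) := by
      have e1 : ∑ j, (c j * X0 i + if j = i then aeval X0 f else 0) * (X' j - X j) =
          (∑ j, c j * (X' j - X j)) * X0 i + aeval X0 f * (X' i - X i) := by
        simp only [add_mul, Finset.sum_add_distrib, ite_mul, zero_mul, Finset.sum_ite_eq',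
          Finset.mem_univ, if_true, Finset.sum_mul]
        congr 1
        exact Finset.sum_congr rfl fun j _ => by ring
      rw [e1, map_mul, map_mul, aeval_X, aeval_X]
      ring
    rw [e]
    refine dvd_add (dvd_add (Dvd.dvd.mul_right (hc k hk X X' h1 h2 h3) _) ?_) ?_
    · rw [pow_succ]
      exact mul_dvd_mul (hcong f k X X' h3) (by simpa using h1 i)
    · rw [pow_succ']
      exact mul_dvd_mul (by simpa using hcong f 1 X0 X' h2) (h3 i)

/-- The polynomial map with integer coefficients on `O^n`. -/
def zmap (Φ : Fin n → MvPolynomial (Fin n) ℤ) (X : Fin n → O) : Fin n → O :=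
  fun i => aeval X (Φ i)

theorem aeval_zmap (Φ : Fin n → MvPolynomial (Fin n) ℤ) (X : Fin n → O)
    (f : MvPolynomial (Fin n) ℤ) : aeval (zmap Φ X) f = aeval X (substEnd ℤ Φ f) := by
  have : aeval (zmap Φ X) = (aeval X).comp (substEnd ℤ Φ) := by
    apply MvPolynomial.algHom_ext
    intro i
    simp [zmap, substEnd]
  rw [this]; rfl

theorem aeval_zmap_iter (Φ : Fin n → MvPolynomial (Fin n) ℤ) (j : ℕ) (X : Fin n → O)
    (f : MvPolynomial (Fin n) ℤ) :
    aeval ((zmap Φ)^[j] X) f = aeval X ((substEnd ℤ Φ ^ j) f) := by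
  induction j generalizing f with
  | zero => rfl
  | succ j ih =>
    rw [Function.iterate_succ_apply', aeval_zmap, ih, pow_succ, AlgHom.mul_apply]

theorem zmap_hasD (P : O) (Φ : Fin n → MvPolynomial (Fin n) ℤ) (X0 : Fin n → O) :
    ∃ M, HasD P {X | Dv P 1 (X - X0)} (zmap Φ) M := by
  choose c hc using fun i => poly_taylor P X0 (Φ i)
  refine ⟨Matrix.of c, ?_⟩
  intro k hk X hX X' hX' hd i
  exact hc i k hk X X' hX hX' hd

theorem zmap_iter_hasD (P : O) (Φ : Fin n → MvPolynomial (Fin n) ℤ) (X0 : Fin n → O) (j : ℕ) :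
    ∃ M, HasD P {X | Dv P 1 (X - X0)} ((zmap Φ)^[j]) M := by
  induction j with
  | zero => exact ⟨1, HasD.id⟩
  | succ j ih =>
    obtain ⟨M, hM⟩ := ih
    obtain ⟨M', hM'⟩ := zmap_hasD P Φ ((zmap Φ)^[j] X0)
    refine ⟨M' * M, ?_⟩
    rw [Function.iterate_succ']
    refine hM.comp hM' fun X hX => ?_
    exact hM.dv le_rfl (by simpa using Dv.zero) hX hX

theorem hensel_unique [IsDomain O] {K : Type} [Field K] (π : O →+* K) {P : O} (hP : Prime P)
    (hker : RingHom.ker π = Ideal.span {P})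
    (Φ : Fin n → MvPolynomial (Fin n) ℤ) (i : Fin n) (Q : Polynomial (MvPolynomial (Fin n) ℤ))
    {k : ℕ} {Y Y' : Fin n → O}
    (h1 : aeval Y ((Q.map (substEnd ℤ Φ).toRingHom).eval (X i)) = 0)
    (h2 : aeval Y' ((Q.map (substEnd ℤ Φ).toRingHom).eval (X i)) = 0)
    (h3 : π (aeval Y ((Q.derivative.map (substEnd ℤ Φ).toRingHom).eval (X i))) ≠ 0)
    (h4 : P ∣ Y i - Y' i) (h5 : Dv P k (zmap Φ Y - zmap Φ Y')) : P ^ k ∣ Y i - Y' i := by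
  have conv : ∀ (Q : Polynomial (MvPolynomial (Fin n) ℤ)) (Y : Fin n → O),
      aeval Y ((Q.map (substEnd ℤ Φ).toRingHom).eval (X i)) =
        (Q.map (aeval (zmap Φ Y)).toRingHom).eval (Y i) := by
    intro Q Y
    rw [Polynomial.eval_map, Polynomial.eval_map]
    refine (Polynomial.hom_eval₂ Q (substEnd ℤ Φ).toRingHom (aeval Y).toRingHom (X i)).trans ?_
    have e1 : (aeval Y).toRingHom.comp (substEnd ℤ Φ).toRingHom =
        (aeval (zmap Φ Y)).toRingHom := by
      apply MvPolynomial.ringHom_ext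
      · intro r; simp
      · intro j; exact (aeval_zmap Φ Y _).symm
    have e2 : (aeval Y : MvPolynomial (Fin n) ℤ →ₐ[ℤ] O).toRingHom (X i) = Y i := aeval_X _ _
    rw [e1, e2]
  rw [conv] at h1 h2 h3
  rw [← Polynomial.derivative_map] at h3
  set F := Q.map (aeval (zmap Φ Y)).toRingHom with hF
  set F' := Q.map (aeval (zmap Φ Y')).toRingHom with hF'
  have h6 : P ^ k ∣ F.eval (Y' i) - F'.eval (Y' i) := by
    rw [← Ideal.mem_span_singleton, ← Ideal.Quotient.eq_zero_iff_mem, map_sub, sub_eq_zero]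
    rw [hF, hF', Polynomial.eval_map, Polynomial.eval_map, Polynomial.hom_eval₂,
      Polynomial.hom_eval₂]
    congr 1
    apply MvPolynomial.ringHom_ext
    · intro r; simp
    · intro j
      have := h5 j
      simp only [RingHom.comp_apply]
      rw [← sub_eq_zero, ← map_sub, Ideal.Quotient.eq_zero_iff_mem, Ideal.mem_span_singleton]
      simpa using this
  rw [h2, sub_zero] at h6
  obtain ⟨c, hc⟩ := Polynomial.binomExpansion F (Y i) (Y' i - Y i)
  rw [add_sub_cancel, h1] at hc
  have h7 : F.eval (Y' i) = (F.derivative.eval (Y i) + c * (Y' i - Y i)) * (Y' i - Y i) := by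
    rw [hc]; ring
  rw [h7] at h6
  have h8 : ¬ P ∣ F.derivative.eval (Y i) + c * (Y' i - Y i) := by
    intro h
    have h9 : P ∣ F.derivative.eval (Y i) := by
      have h10 : P ∣ c * (Y' i - Y i) := Dvd.dvd.mul_left (by
        rw [← neg_sub, dvd_neg]; exact h4) _
      exact (dvd_add_left h10).1 h
    rw [← Ideal.mem_span_singleton, ← hker] at h9
    exact h3 h9
  have := hP.pow_dvd_of_dvd_mul_left k h8 h6
  rw [← neg_sub, dvd_neg]; exact this

theorem idem_factorial {G : Type*} [Monoid G] [Finite G] (g : G) :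
    IsIdempotentElem (g ^ (Nat.card G).factorial) := by
  set N := Nat.card G with hN
  have hninj : ¬ Function.Injective (fun i : Fin (N + 1) => g ^ (i : ℕ)) := by
    intro h
    have := Nat.card_le_card_of_injective _ h
    simp at this
    omega
  have : ∃ i j : ℕ, i < j ∧ j ≤ N ∧ g ^ i = g ^ j := by
    simp only [Function.Injective, not_forall] at hninj
    obtain ⟨a, b, hab, hne⟩ := hninj
    rcases lt_or_gt_of_ne hne with h | h
    · exact ⟨a, b, h, by omega, hab⟩
    · exact ⟨b, a, h, by omega, hab.symm⟩
  obtain ⟨i, j, hij, hj, he⟩ := this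
  have h1 : ∀ c m, i ≤ m → g ^ (m + c * (j - i)) = g ^ m := by
    intro c
    induction c with
    | zero => intro m _; simp
    | succ c ih =>
      intro m hm
      have e1 : m + (c + 1) * (j - i) = (m - i) + c * (j - i) + j := by
        rw [add_mul]; omega
      rw [e1, pow_add, ← he, ← pow_add]
      have e2 : m - i + c * (j - i) + i = m + c * (j - i) := by omega
      rw [e2, ih m hm]
  obtain ⟨c, hc⟩ : (j - i) ∣ N.factorial := Nat.dvd_factorial (by omega) (by omega)
  have h2 := h1 c N.factorial (by have := Nat.self_le_factorial N; omega)
  rw [mul_comm, ← hc, pow_add] at h2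
  exact h2

end Dynamics

section Final

theorem aeval_ringHom {n : ℕ} {O K : Type} [CommRing O] [CommRing K] (π : O →+* K)
    (X : Fin n → O) (f : MvPolynomial (Fin n) ℤ) :
    π (aeval X f) = aeval (fun i => π (X i)) f := by
  have h : (π.comp (aeval X : MvPolynomial (Fin n) ℤ →ₐ[ℤ] O).toRingHom) =
      (aeval (fun i => π (X i)) : MvPolynomial (Fin n) ℤ →ₐ[ℤ] K).toRingHom := by
    apply MvPolynomial.ringHom_ext
    · intro r; simp
    · intro j; simp
  exact RingHom.congr_fun h f

theorem zmap_ringHom {n : ℕ} {O K : Type} [CommRing O] [CommRing K] (π : O →+* K)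
    (Φ : Fin n → MvPolynomial (Fin n) ℤ) (j : ℕ) (X : Fin n → O) :
    (fun i => π ((zmap Φ)^[j] X i)) = (zmap Φ)^[j] (fun i => π (X i)) := by
  induction j with
  | zero => rfl
  | succ j ih =>
    rw [Function.iterate_succ_apply', Function.iterate_succ_apply', ← ih]
    funext i
    exact aeval_ringHom π _ _

theorem dyn_final {n : ℕ} {O K : Type} [CommRing O] [IsDomain O] [Field K] [Finite K] (p : ℕ)
    (π : O →+* K) (hP : Prime (p : O)) (hker : RingHom.ker π = Ideal.span {(p : O)})
    (Φ : Fin n → MvPolynomial (Fin n) ℤ) (Q : Fin n → Polynomial (MvPolynomial (Fin n) ℤ))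
    (hQ : ∀ i, (substEnd ℤ Φ ^ n) (((Q i).map (substEnd ℤ Φ).toRingHom).eval (X i)) = 0)
    (x : Fin n → K) (l : ℕ) (hl : (zmap Φ)^[l] x = x)
    (hh : ∀ j i, aeval ((zmap Φ)^[j] x)
      (((Q i).derivative.map (substEnd ℤ Φ).toRingHom).eval (X i)) ≠ 0)
    (Y : Fin n → O) (hY : ∀ G, (substEnd ℤ Φ ^ n) G = 0 → aeval Y G = 0)
    (hx : ∀ i, π (Y i) = x i) (k : ℕ) :
    Dv (p : O) (k + 1)
      ((zmap Φ)^[l * (Nat.card (Matrix (Fin n) (Fin n) K)).factorial * p ^ k] Y - Y) := by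
  set b := (Nat.card (Matrix (Fin n) (Fin n) K)).factorial with hb
  let S : Set (Fin n → O) := {Z | (∀ G, (substEnd ℤ Φ ^ n) G = 0 → aeval Z G = 0) ∧
    (fun i => π (Z i)) = x}
  have hYS : Y ∈ S := ⟨hY, funext hx⟩
  have hclose : ∀ Z ∈ S, ∀ Z' ∈ S, Dv (p : O) 1 (Z - Z') := by
    intro Z hZ Z' hZ' i
    rw [pow_one, ← Ideal.mem_span_singleton, ← hker, RingHom.mem_ker, Pi.sub_apply, map_sub]
    have e1 := congrFun hZ.2 i
    have e2 := congrFun hZ'.2 i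
    rw [e1, e2, sub_self]
  have hVmap : ∀ j (Z : Fin n → O), (∀ G, (substEnd ℤ Φ ^ n) G = 0 → aeval Z G = 0) →
      ∀ G, (substEnd ℤ Φ ^ n) G = 0 → aeval ((zmap Φ)^[j] Z) G = 0 := by
    intro j Z hZ G hG
    rw [aeval_zmap_iter]
    apply hZ
    rw [← AlgHom.mul_apply, ← pow_add, add_comm, pow_add, AlgHom.mul_apply, hG, map_zero]
  set T0 : (Fin n → O) → (Fin n → O) := (zmap Φ)^[l] with hT0
  have hT0S : Set.MapsTo T0 S S := by
    intro Z hZ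
    refine ⟨hVmap l Z hZ.1, ?_⟩
    rw [zmap_ringHom, hZ.2, hl]
  have hinj0 : InjP (p : O) S T0 := by
    intro k hk Z hZ Z' hZ' hd
    have key : ∀ j, Dv (p : O) k ((zmap Φ)^[j] Z - (zmap Φ)^[j] Z') → Dv (p : O) k (Z - Z') := by
      intro j
      induction j with
      | zero => intro h; exact h
      | succ j ih =>
        intro h
        apply ih
        intro i
        rw [Function.iterate_succ_apply', Function.iterate_succ_apply'] at h
        refine hensel_unique π hP hker Φ i (Q i) (hVmap j Z hZ.1 _ (hQ i))
          (hVmap j Z' hZ'.1 _ (hQ i)) ?_ ?_ h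
        · rw [aeval_ringHom, zmap_ringHom, hZ.2]
          exact hh j i
        · rw [← Ideal.mem_span_singleton, ← hker, RingHom.mem_ker, map_sub, sub_eq_zero]
          have e1 := congrFun (zmap_ringHom π Φ j Z) i
          have e2 := congrFun (zmap_ringHom π Φ j Z') i
          rw [e1, e2, hZ.2, hZ'.2]
    exact key l hd
  obtain ⟨M, hM⟩ := zmap_iter_hasD (p : O) Φ Y l
  have hM0 : HasD (p : O) S T0 M := hM.mono fun Z hZ => hclose Z hZ Y hYS
  have := period_all p π hker (hT0S.iterate b) (hM0.iterate hT0S b)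
    (by rw [map_pow]; exact idem_factorial _) (hinj0.iterate hT0S b)
    (fun Z hZ => hclose _ (hT0S.iterate b hZ) Z hZ) k Y hYS
  rw [hT0, ← Function.iterate_mul, ← Function.iterate_mul, ← mul_assoc] at this
  exact this

theorem map_substEnd (p : ℕ) {n : ℕ} (Φ : Fin n → MvPolynomial (Fin n) ℤ) {R : Type} [CommRing R]
    (j : ℕ) (f : MvPolynomial (Fin n) ℤ) :
    MvPolynomial.map (Int.castRingHom R) ((substEnd ℤ Φ ^ j) f) =
      (substEnd R (fun i => MvPolynomial.map (Int.castRingHom R) (Φ i)) ^ j)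
        (MvPolynomial.map (Int.castRingHom R) f) := by
  induction j generalizing f with
  | zero => rfl
  | succ j ih =>
    rw [pow_succ, pow_succ, AlgHom.mul_apply, AlgHom.mul_apply, ih]
    congr 1
    have h : (MvPolynomial.map (Int.castRingHom R)).comp (substEnd ℤ Φ).toRingHom =
      (substEnd R (fun i => MvPolynomial.map (Int.castRingHom R) (Φ i))).toRingHom.comp
        (MvPolynomial.map (Int.castRingHom R)) := by
      apply MvPolynomial.ringHom_ext
      · intro r; simp
      · intro j; simp [substEnd]
    exact RingHom.congr_fun h f

theorem eval_map_int {n : ℕ} {R : Type} [CommRing R] (x : Fin n → R)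
    (f : MvPolynomial (Fin n) ℤ) :
    eval x (MvPolynomial.map (Int.castRingHom R) f) = aeval x f := by
  rw [eval_map, aeval_def, algebraMap_int_eq]

theorem frob_point {n p m : ℕ} [Fact p.Prime] {K : Type} [Field K] [CharP K p]
    (Φ : Fin n → MvPolynomial (Fin n) ℤ) (x : Fin n → K)
    (hx : ∀ i, aeval x (Φ i) = x i ^ p ^ m) (j : ℕ) :
    (zmap Φ)^[j] x = fun i => x i ^ (p ^ m) ^ j := by
  induction j with
  | zero => funext i; simp
  | succ j ih =>
    rw [Function.iterate_succ_apply', ih]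
    funext i
    have e := aeval_ringHom (iterateFrobenius K p (m * j)) x (Φ i)
    simp only [iterateFrobenius_def, pow_mul] at e
    change aeval _ (Φ i) = _
    rw [← e, hx, ← pow_mul, pow_succ, mul_comm]

theorem frob_aeval {n p m : ℕ} [Fact p.Prime] {K : Type} [Field K] [CharP K p]
    (Φ : Fin n → MvPolynomial (Fin n) ℤ) (x : Fin n → K)
    (hx : ∀ i, aeval x (Φ i) = x i ^ p ^ m) (j : ℕ) (f : MvPolynomial (Fin n) ℤ) :
    aeval ((zmap Φ)^[j] x) f = (aeval x f) ^ (p ^ m) ^ j := by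
  rw [frob_point Φ x hx]
  have e := aeval_ringHom (iterateFrobenius K p (m * j)) x f
  simp only [iterateFrobenius_def, pow_mul] at e
  exact e.symm

theorem frob_period {p l : ℕ} [Fact p.Prime] (hl : l ≠ 0) (m : ℕ) (x : GaloisField p l) :
    x ^ (p ^ m) ^ l = x := by
  have : Fintype (GaloisField p l) := Fintype.ofFinite _
  have h := FiniteField.pow_card_pow m x
  rw [← Nat.card_eq_fintype_card, GaloisField.card p l hl] at h
  rw [← pow_mul, mul_comm, pow_mul]
  exact h

theorem exists_exp {n : ℕ} (p : ℕ) (hp : 1 < p) (d : Fin n → ℕ) (e : ℕ) :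
    ∃ m, m ≠ 0 ∧ (∀ i, d i < p ^ m) ∧ e < p ^ m := by
  refine ⟨(∑ i, d i) + e + 1, by omega, fun i => ?_, ?_⟩
  · have h1 : d i ≤ ∑ i, d i := Finset.single_le_sum (fun _ _ => Nat.zero_le _) (Finset.mem_univ i)
    have h2 := Nat.lt_pow_self (n := (∑ i, d i) + e + 1) hp
    omega
  · have h2 := Nat.lt_pow_self (n := (∑ i, d i) + e + 1) hp
    omega

end Final

/-- **Main algebro-geometric theorem.** Let `Φ` be an `n`-variable polynomial self-map of
affine `n`-space with integer coefficients, `V` the Zariski closure over `ℤ` of the image of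
`Φⁿ` (defined by the ideal `I(V(ℤ)) = ker (Φ*)ⁿ`), and `W` a proper closed subscheme of `V`
(given by an ideal `J` strictly containing `I(V(ℤ))`). Then for every sufficiently large
prime `p` there exist `q = p^l` and a point `x ∈ V(𝔽_q) ∖ W(𝔽_q)` such that for every
`X ∈ V(ℤ_q)` reducing to `x` mod `p` we have `Φ^{a·p^k}(X) ≡ X (mod p^k)` for a fixed `a`
and every `k ≥ 1`; in particular `X` is uniformly recurrent for `Φ` in the `p`-adic
topology on `V(ℤ_q)`. -/
theorem mainAlg_recurrent_point (n : ℕ) (Φ : Fin n → MvPolynomial (Fin n) ℤ)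
    (J : Ideal (MvPolynomial (Fin n) ℤ)) (hJ : iterKer ℤ Φ < J) :
    ∃ B : ℕ, ∀ (p : ℕ) (_ : Fact p.Prime), p > B →
      ∃ l : ℕ, 1 ≤ l ∧ ∃ a : ℕ, 0 < a ∧
        ∃ x : Fin n → GaloisField p l,
          -- `x ∈ V(𝔽_q) ∖ W(𝔽_q)`
          ((∀ G ∈ iterKer ℤ Φ,
              eval x (MvPolynomial.map (Int.castRingHom (GaloisField p l)) G) = 0) ∧
            ¬ (∀ G ∈ J,
              eval x (MvPolynomial.map (Int.castRingHom (GaloisField p l)) G) = 0)) ∧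
          -- for every `X ∈ V(ℤ_q)` with `π(X) = x`: `Φ^{a·p^k}(X) ≡ X (mod p^k)`
          (∀ (π : Zq p l →+* GaloisField p l), Function.Surjective π →
            RingHom.ker π = Ideal.span {(p : Zq p l)} →
            ∀ X : Fin n → Zq p l,
              (∀ G ∈ iterKer (Zq p l)
                (fun i => MvPolynomial.map (Int.castRingHom (Zq p l)) (Φ i)),
                  eval X G = 0) →
              (∀ i, π (X i) = x i) →
              ∀ k : ℕ, 1 ≤ k → ∀ i,
                ((p : Zq p l) ^ k) ∣
                  ((polySelfMap
                    (fun i => MvPolynomial.map (Int.castRingHom (Zq p l)) (Φ i)))^[a * p ^ k]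
                      X i - X i)) := by
  obtain ⟨G, hGJ, hGI⟩ := SetLike.exists_of_lt hJ
  choose Q hQ0 hQ1 using fun i => exists_rel n (substEnd ℤ Φ) (X i)
  have hG0 : (substEnd ℤ Φ ^ n) G ≠ 0 := fun h => hGI h
  set D : MvPolynomial (Fin n) ℤ :=
    G * ∏ i, ((Q i).derivative.map (substEnd ℤ Φ).toRingHom).eval (X i) with hD
  have hD0 : (substEnd ℤ Φ ^ n) D ≠ 0 := by
    rw [hD, map_mul, map_prod]
    exact mul_ne_zero hG0 (Finset.prod_ne_zero_iff.2 fun i _ => hQ1 i)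
  obtain ⟨s, hs⟩ := MvPolynomial.ne_zero_iff.1 hD0
  refine ⟨(coeff s ((substEnd ℤ Φ ^ n) D)).natAbs, fun p hpf hpB => ?_⟩
  have hp : p.Prime := hpf.out
  set Ψ : Fin n → MvPolynomial (Fin n) (ZMod p) :=
    fun i => MvPolynomial.map (Int.castRingHom (ZMod p)) (Φ i) with hΨ
  have hDp : (substEnd (ZMod p) Ψ ^ n) (MvPolynomial.map (Int.castRingHom (ZMod p)) D) ≠ 0 := by
    rw [hΨ, ← map_substEnd p]
    intro h
    have h1 := congrArg (coeff s) h
    rw [coeff_map, coeff_zero, eq_intCast, ZMod.intCast_zmod_eq_zero_iff_dvd] at h1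
    have h2 := Int.natAbs_dvd_natAbs.2 h1
    rw [Int.natAbs_natCast] at h2
    have h3 := Nat.le_of_dvd (Int.natAbs_pos.2 hs) h2
    omega
  obtain ⟨m, hm, hm1, hm2⟩ := exists_exp p hp.one_lt (fun i => (Ψ i).totalDegree)
    ((substEnd (ZMod p) Ψ ^ n) (MvPolynomial.map (Int.castRingHom (ZMod p)) D)).totalDegree
  obtain ⟨l, hl, x, hx, hxD⟩ := exists_point p Ψ _ hm hm1 hm2 hDp
  have hconv : ∀ f : MvPolynomial (Fin n) ℤ,
      aeval x (MvPolynomial.map (Int.castRingHom (ZMod p)) f) = aeval x f := by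
    intro f
    rw [← algebraMap_int_eq, aeval_map_algebraMap]
  have hx' : ∀ i, aeval x (Φ i) = x i ^ p ^ m := fun i => by rw [← hconv]; exact hx i
  rw [hconv, hD, map_mul, map_prod] at hxD
  have hxG : aeval x G ≠ 0 := left_ne_zero_of_mul hxD
  have hxQ := fun i => Finset.prod_ne_zero_iff.1 (right_ne_zero_of_mul hxD) i (Finset.mem_univ i)
  refine ⟨l, hl, l * (Nat.card (Matrix (Fin n) (Fin n) (GaloisField p l))).factorial,
    Nat.mul_pos hl (Nat.factorial_pos _), x, ⟨?_, ?_⟩, ?_⟩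
  · intro F hF
    have hF' : (substEnd ℤ Φ ^ n) F = 0 := hF
    rw [eval_map_int]
    have h1 := frob_aeval Φ x hx' n F
    rw [aeval_zmap_iter, hF', map_zero] at h1
    exact eq_zero_of_pow_eq_zero h1.symm
  · intro h
    exact hxG (by rw [← eval_map_int]; exact h G hGJ)
  · intro π hπ hker Y hY hYx k hk
    have hP0 : (p : Zq p l) ≠ 0 := WittVector.p_nonzero p _
    have hPp : Prime (p : Zq p l) := by
      rw [← Ideal.span_singleton_prime hP0, ← hker]
      exact RingHom.ker_isPrime π
    have hpoly : polySelfMap (fun i => MvPolynomial.map (Int.castRingHom (Zq p l)) (Φ i)) =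
        zmap Φ := by
      funext v i
      exact eval_map_int v (Φ i)
    rw [hpoly]
    have := dyn_final p π hPp hker Φ Q hQ0 x l
      (by rw [frob_point Φ x hx']; funext i; exact frob_period (by omega) m (x i))
      (fun j i => by rw [frob_aeval Φ x hx']; exact pow_ne_zero _ (hxQ i))
      Y (fun F hF => by
        rw [← eval_map_int]
        apply hY
        change (substEnd _ _ ^ n) _ = 0
        rw [← map_substEnd p, hF, map_zero])
      hYx k
    exact this.mono (Nat.le_succ k)

end
end
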